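/- (Dihedral sieving for noncrossing partitions.) Let n be odd, let P ∈ ℤ[s,t] be the unique polynomial with P·{n+1}_{s,t}·{n}!_{s,t}·{n}!_{s,t} = {2n}!_{s,t}, and let ζ = exp(2πi/n) ∈ ℂ. Then for every integer ℓ, P(ζ^ℓ + ζ^{−ℓ}, −1) equals the number of noncrossing set partitions π of ℤ/nℤ fixed by the rotation x ↦ x+ℓ; and P(0, 1) equals the number of noncrossing set partitions of ℤ/nℤ fixed by x ↦ −x. -/

import Mathlib

open MvPolynomial

/-- The generalized Fibonacci polynomials `{m}_{s,t} ∈ ℤ[s,t]`, with `s = X 0`, `t = X 1`. -/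
noncomputable def gfib : ℕ → MvPolynomial (Fin 2) ℤ
  | 0 => 0
  | 1 => 1
  | (m + 2) => X 0 * gfib (m + 1) + X 1 * gfib m

/-- The Fibonacci factorial `{m}!_{s,t}`. -/
noncomputable def gfibFact : ℕ → MvPolynomial (Fin 2) ℤ
  | 0 => 1
  | (m + 1) => gfib (m + 1) * gfibFact m

/-- The primitive `n`-th root of unity `ζ = exp(2πi/n)`. -/
noncomputable def primRoot (n : ℕ) : ℂ := Complex.exp (2 * Real.pi * Complex.I / n)

/-- A set partition of `ℤ/nℤ` is noncrossing if there are no residues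
`a < b < c < d` (as natural numbers in `[0, n)`) with `a, c` in one block and `b, d` in a
different block. -/
def IsNoncrossing {n : ℕ} [NeZero n] (π : Finpartition (Finset.univ : Finset (ZMod n))) :
    Prop :=
  ¬ ∃ (a b c d : ZMod n) (B₁ B₂ : Finset (ZMod n)), B₁ ∈ π.parts ∧ B₂ ∈ π.parts ∧
      B₁ ≠ B₂ ∧ a ∈ B₁ ∧ c ∈ B₁ ∧ b ∈ B₂ ∧ d ∈ B₂ ∧
      a.val < b.val ∧ b.val < c.val ∧ c.val < d.val

/-!
If a specialization sends `{d}` to `0` and `{d + 1}` to `1`, then the specialized Fibonacci numbers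
have period `d` and the quotient `{d * j} / {d}` specializes to `j`; cancelling the vanishing
factors of the `(s, t)`-Catalan number therefore leaves a binomial coefficient.

On the other side, a noncrossing partition of the circle with a rotational or reflectional symmetry
unrolls to a noncrossing equivalence relation on `ℤ`, either by winding around the centre or by
cutting the circle at a point respected by the symmetry. Such a relation of period `N` is the level
structure of a periodic `±1` path with two steps for each integer: its classes are read off from the
excursions of the path. Bridges of length `2 * N`, with or without a positivity or symmetry
condition, are counted by the reflection principle.
-/

/-! ### Specializations of the Fibonacci polynomials -/

theorem gfib_succ_succ (m : ℕ) : gfib (m + 2) = X 0 * gfib (m + 1) + X 1 * gfib m := rfl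

theorem gfib_add_add_one (m n : ℕ) :
    gfib (m + n + 1) = gfib (m + 1) * gfib (n + 1) + X 1 * gfib m * gfib n := by
  induction m using Nat.twoStepInduction with
  | zero => simp [gfib]
  | one => rw [show 1 + n + 1 = n + 2 by omega, gfib_succ_succ]; simp [gfib]
  | more m ih₀ ih₁ =>
    rw [show m + 2 + n + 1 = m + n + 1 + 2 by omega, gfib_succ_succ (m + n + 1),
      show m + n + 1 + 1 = m + 1 + n + 1 by omega, ih₀, ih₁, gfib_succ_succ (m + 1),
      gfib_succ_succ m]
    ring

theorem gfibFact_add (m r : ℕ) :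
    gfibFact (m + r) = gfibFact m * ∏ i ∈ Finset.range r, gfib (m + i + 1) := by
  induction r with
  | zero => simp
  | succ r ih => rw [Finset.prod_range_succ, ← add_assoc, gfibFact, ih]; ring

theorem gfibFact_eq_prod (m : ℕ) : gfibFact m = ∏ i ∈ Finset.range m, gfib (i + 1) := by
  simpa [gfibFact] using gfibFact_add 0 m

theorem sub_mul_aeval_gfib {K : Type*} [CommRing K] (a b : K) (m : ℕ) :
    (a - b) * aeval ![a + b, -(a * b)] (gfib m) = a ^ m - b ^ m := by
  induction m using Nat.twoStepInduction with
  | zero => simp [gfib]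
  | one => simp [gfib]
  | more m ih₀ ih₁ =>
    rw [gfib_succ_succ, map_add, map_mul, map_mul, aeval_X, aeval_X]
    simp only [Matrix.cons_val_zero, Matrix.cons_val_one]
    linear_combination (a + b) * ih₁ - a * b * ih₀

theorem aeval_gfib_two_neg_one (K : Type*) [CommRing K] (m : ℕ) :
    aeval ![(2 : K), -1] (gfib m) = (m : K) := by
  induction m using Nat.twoStepInduction with
  | zero => simp [gfib]
  | one => simp [gfib]
  | more m ih₀ ih₁ =>
    rw [gfib_succ_succ, map_add, map_mul, map_mul, aeval_X, aeval_X, ih₀, ih₁]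
    simp only [Matrix.cons_val_zero, Matrix.cons_val_one]
    push_cast
    ring

theorem aeval_gfibFact_two_neg_one (K : Type*) [CommRing K] (m : ℕ) :
    aeval ![(2 : K), -1] (gfibFact m) = (m.factorial : K) := by
  simp only [gfibFact_eq_prod, map_prod, aeval_gfib_two_neg_one,
    ← Finset.prod_range_add_one_eq_factorial, Nat.cast_prod]

theorem gfib_ne_zero {m : ℕ} (hm : m ≠ 0) : gfib m ≠ 0 := by
  intro h
  have := aeval_gfib_two_neg_one ℤ m
  rw [h, map_zero] at this
  exact hm (by exact_mod_cast this.symm)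

theorem aeval_two_neg_one_eq_catalan {K : Type*} [Field K] [CharZero K] {n : ℕ}
    {P : MvPolynomial (Fin 2) ℤ}
    (hP : P * (gfib (n + 1) * gfibFact n * gfibFact n) = gfibFact (2 * n)) :
    aeval ![(2 : K), -1] P = (catalan n : K) := by
  have hval := congrArg (aeval ![(2 : K), -1]) hP
  simp only [map_mul, aeval_gfib_two_neg_one, aeval_gfibFact_two_neg_one] at hval
  have hcat : ((n + 1) * catalan n) * n.factorial * n.factorial = (2 * n).factorial := by
    rw [succ_mul_catalan_eq_centralBinom, Nat.centralBinom_eq_two_mul_choose, two_mul]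
    exact Nat.add_choose_mul_factorial_mul_factorial n n
  have hne : ((n + 1 : ℕ) : K) * n.factorial * n.factorial ≠ 0 := by
    exact_mod_cast (by positivity : (n + 1) * n.factorial * n.factorial ≠ 0)
  apply mul_right_cancel₀ hne
  have hcat' := congrArg (Nat.cast (R := K)) hcat
  push_cast at hcat' hval ⊢
  linear_combination hval - hcat'

section Period

variable {K : Type*} [CommRing K] {φ : MvPolynomial (Fin 2) ℤ →+* K} {d : ℕ}

theorem map_gfib_add_of_period (h₀ : φ (gfib d) = 0) (h₁ : φ (gfib (d + 1)) = 1) (m : ℕ) :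
    φ (gfib (d + m)) = φ (gfib m) := by
  cases m with
  | zero => simpa [gfib] using h₀
  | succ m => simp [← add_assoc, gfib_add_add_one, h₀, h₁]

theorem map_gfib_mul_add_of_period (h₀ : φ (gfib d) = 0) (h₁ : φ (gfib (d + 1)) = 1) (k m : ℕ) :
    φ (gfib (d * k + m)) = φ (gfib m) := by
  induction k with
  | zero => simp
  | succ k ih =>
    rw [mul_add_one, add_right_comm, add_comm _ d, map_gfib_add_of_period h₀ h₁, ih]

theorem exists_gfib_mul_eq (hd : 0 < d) (h₀ : φ (gfib d) = 0) (h₁ : φ (gfib (d + 1)) = 1)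
    (j : ℕ) : ∃ q, gfib (d * j) = gfib d * q ∧ φ q = j := by
  induction j with
  | zero => exact ⟨0, by simp [gfib]⟩
  | succ j ih =>
    obtain ⟨q, hq, hφq⟩ := ih
    obtain ⟨e, rfl⟩ := Nat.exists_eq_add_one.mpr hd
    refine ⟨gfib ((e + 1) * j + 1) + X 1 * q * gfib e, ?_, ?_⟩
    · rw [mul_add_one, ← add_assoc, gfib_add_add_one, hq]
      ring
    · have hX : φ (X 1 * gfib e) = 1 := by
        simpa [gfib_succ_succ, h₀] using h₁
      rw [mul_right_comm, map_add, map_mul, hX, map_gfib_mul_add_of_period h₀ h₁, hφq, gfib]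
      simp [add_comm]

theorem exists_gfibFact_mul_eq (hd : 0 < d) (h₀ : φ (gfib d) = 0) (h₁ : φ (gfib (d + 1)) = 1)
    (k : ℕ) : ∃ q, gfibFact (d * k) = gfib d ^ k * q ∧
      φ q = k.factorial * φ (gfibFact (d - 1)) ^ k := by
  induction k with
  | zero => exact ⟨1, by simp [gfibFact]⟩
  | succ k ih =>
    obtain ⟨q, hq, hφq⟩ := ih
    obtain ⟨r, hr, hφr⟩ := exists_gfib_mul_eq hd h₀ h₁ (k + 1)
    obtain ⟨e, rfl⟩ := Nat.exists_eq_add_one.mpr hd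
    refine ⟨q * (∏ i ∈ Finset.range e, gfib ((e + 1) * k + i + 1)) * r, ?_, ?_⟩
    · rw [mul_add_one] at hr ⊢
      rw [← add_assoc] at hr ⊢
      rw [gfibFact, hr, gfibFact_add, hq]
      ring
    · simp only [map_mul, map_prod, hφq, hφr, add_assoc, map_gfib_mul_add_of_period h₀ h₁,
        gfibFact_eq_prod, Nat.factorial_succ, add_tsub_cancel_right]
      push_cast
      ring

theorem map_eq_choose_of_period [IsDomain K] [CharZero K] {k : ℕ} {P : MvPolynomial (Fin 2) ℤ}
    (hd : 0 < d) (h₀ : φ (gfib d) = 0) (h₁ : φ (gfib (d + 1)) = 1)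
    (hfact : φ (gfibFact (d - 1)) ≠ 0)
    (hP : P * (gfib (d * k + 1) * gfibFact (d * k) * gfibFact (d * k)) =
      gfibFact (2 * (d * k))) :
    φ P = (2 * k).choose k := by
  obtain ⟨q, hq, hφq⟩ := exists_gfibFact_mul_eq hd h₀ h₁ k
  obtain ⟨r, hr, hφr⟩ := exists_gfibFact_mul_eq hd h₀ h₁ (2 * k)
  have hcancel : P * (gfib (d * k + 1) * q * q) = r := by
    apply mul_left_cancel₀ (pow_ne_zero (2 * k) (gfib_ne_zero hd.ne'))
    rw [← hr, mul_left_comm d, ← hP, hq]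
    ring
  have hval := congrArg φ hcancel
  simp only [map_mul, map_gfib_mul_add_of_period h₀ h₁, hφq, hφr, gfib, map_one] at hval
  have hchoose := congrArg (Nat.cast (R := K)) (Nat.add_choose_mul_factorial_mul_factorial k k)
  have hne : (k.factorial * φ (gfibFact (d - 1)) ^ k) * (k.factorial * φ (gfibFact (d - 1)) ^ k)
      ≠ 0 := by
    have := (Nat.cast_ne_zero (R := K)).mpr k.factorial_ne_zero
    simp [this, hfact]
  apply mul_right_cancel₀ hne
  rw [← two_mul] at hchoose
  push_cast at hchoose
  linear_combination hval - φ (gfibFact (d - 1)) ^ (2 * k) * hchoose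

end Period

theorem aeval_add_neg_mul_eq_choose {K : Type*} [Field K] [CharZero K] {a b : K} {d k : ℕ}
    {P : MvPolynomial (Fin 2) ℤ} (hd : 2 ≤ d) (ha : a ^ d = 1) (hb : b ^ d = 1)
    (hab : ∀ r, 0 < r → r < d → a ^ r ≠ b ^ r)
    (hP : P * (gfib (d * k + 1) * gfibFact (d * k) * gfibFact (d * k)) =
      gfibFact (2 * (d * k))) :
    aeval ![a + b, -(a * b)] P = ((2 * k).choose k : K) := by
  set φ : MvPolynomial (Fin 2) ℤ →+* K := (aeval ![a + b, -(a * b)] : _ →ₐ[ℤ] K).toRingHom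
  have hφ (m : ℕ) : (a - b) * φ (gfib m) = a ^ m - b ^ m := sub_mul_aeval_gfib a b m
  have hne : a - b ≠ 0 := sub_ne_zero.mpr (by simpa using hab 1 one_pos hd)
  refine map_eq_choose_of_period (φ := φ) (by omega) ?_ ?_ ?_ hP
  · exact mul_left_cancel₀ hne (by rw [hφ, ha, hb, sub_self, mul_zero])
  · exact mul_left_cancel₀ hne (by rw [hφ, pow_succ, pow_succ, ha, hb, one_mul, one_mul, mul_one])
  · rw [gfibFact_eq_prod, map_prod, Finset.prod_ne_zero_iff]
    intro i hi h
    have hi' := Finset.mem_range.mp hi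
    refine hab (i + 1) (by omega) (by omega) (sub_eq_zero.mp ?_)
    rw [← hφ, h, mul_zero]

theorem aeval_zero_one_eq_choose {K : Type*} [Field K] [CharZero K] {m : ℕ}
    {P : MvPolynomial (Fin 2) ℤ}
    (hP : P * (gfib (2 * m + 1 + 1) * gfibFact (2 * m + 1) * gfibFact (2 * m + 1)) =
      gfibFact (2 * (2 * m + 1))) :
    aeval ![(0 : K), 1] P = ((2 * m + 1).choose m : K) := by
  set φ : MvPolynomial (Fin 2) ℤ →+* K := (aeval ![(0 : K), 1] : _ →ₐ[ℤ] K).toRingHom with hφ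
  have h₀ : φ (gfib 2) = 0 := by simp [hφ, gfib]
  have h₁ : φ (gfib (2 + 1)) = 1 := by simp [hφ, gfib]
  obtain ⟨p, hp, hφp⟩ := exists_gfib_mul_eq two_pos h₀ h₁ (m + 1)
  obtain ⟨q, hq, hφq⟩ := exists_gfibFact_mul_eq two_pos h₀ h₁ m
  obtain ⟨r, hr, hφr⟩ := exists_gfibFact_mul_eq two_pos h₀ h₁ (2 * m + 1)
  have hodd : φ (gfib (2 * m + 1)) = 1 := by
    rw [map_gfib_mul_add_of_period h₀ h₁, gfib, map_one]
  have hcancel : P * (p * (gfib (2 * m + 1) * q) * (gfib (2 * m + 1) * q)) = r := by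
    apply mul_left_cancel₀ (pow_ne_zero (2 * m + 1) (gfib_ne_zero two_ne_zero))
    rw [← hr, ← hP, show 2 * m + 1 + 1 = 2 * (m + 1) by ring, hp, gfibFact, hq]
    ring
  have hval := congrArg φ hcancel
  have hone : φ (gfibFact (2 - 1)) = 1 := by simp [gfibFact, gfib]
  simp only [map_mul, hodd, hφp, hφq, hφr, hone, one_pow, one_mul, mul_one] at hval
  have hchoose := congrArg (Nat.cast (R := K))
    (Nat.add_choose_mul_factorial_mul_factorial (m + 1) m)
  have hne : (m + 1 : K) * (m.factorial * m.factorial) ≠ 0 := by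
    exact_mod_cast (by positivity : (m + 1) * (m.factorial * m.factorial) ≠ 0)
  apply mul_right_cancel₀ hne
  rw [add_right_comm, ← two_mul, Nat.factorial_succ m] at hchoose
  push_cast at hchoose hval
  change φ P * _ = _
  linear_combination hval - hchoose

/-! ### Periodic noncrossing relations and bridges -/

/-- The translations of `ℤ` under which a relation is invariant. -/
def translations (R : Setoid ℤ) : AddSubgroup ℤ where
  carrier := {t | ∀ x y, R (x + t) (y + t) ↔ R x y}
  zero_mem' := by simp
  add_mem' {s t} hs ht x y := by rw [← add_assoc, ← add_assoc, ht, hs]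
  neg_mem' {t} ht x y := by simpa using (ht (x + -t) (y + -t)).symm

theorem mem_translations {R : Setoid ℤ} {t : ℤ} :
    t ∈ translations R ↔ ∀ x y, R (x + t) (y + t) ↔ R x y := Iff.rfl

/-- An equivalence relation on the line `ℤ` none of whose classes cross. -/
def IsNoncrossingOnLine (T : Setoid ℤ) : Prop :=
  ∀ ⦃a b c d : ℤ⦄, a < b → b < c → c < d → T a c → T b d → T a b

/-- A noncrossing equivalence relation on the line `ℤ` that is invariant under translation
by `N > 0`. -/
structure IsPeriodicNoncrossing (N : ℤ) (T : Setoid ℤ) : Prop where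
  pos : 0 < N
  noncrossing : IsNoncrossingOnLine T
  mem_translations : N ∈ translations T

/-- A bridge of length `2 * N > 0`: a closed `±1` path based at `0`, continued periodically. -/
structure IsBridge (N : ℤ) (h : ℤ → ℤ) : Prop where
  pos : 0 < N
  map_zero : h 0 = 0
  step (p : ℤ) : h (p + 1) = h p + 1 ∨ h (p + 1) = h p - 1
  periodic : Function.Periodic h (2 * N)

namespace IsBridge

variable {N : ℤ} {h : ℤ → ℤ}

theorem two_dvd_sub (hh : IsBridge N h) (p : ℤ) : 2 ∣ h p - p := by
  induction p using Int.induction_on with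
  | zero => simp [hh.map_zero]
  | succ i ih => have := hh.step i; omega
  | pred i ih =>
    have := hh.step (-i - 1)
    rw [sub_add_cancel] at this
    omega

theorem comp_neg (hh : IsBridge N h) : IsBridge N (fun p ↦ h (-p)) where
  pos := hh.pos
  map_zero := by simpa using hh.map_zero
  step p := by
    have := hh.step (-(p + 1))
    rw [show -(p + 1) + 1 = -p by ring] at this
    omega
  periodic p := by simp only [neg_add', hh.periodic.sub_eq]

theorem exists_last_visit (hh : IsBridge N h) {q v : ℤ} (hv : v < h q) (hex : ∃ p, h p ≤ v) :
    ∃ p < q, h p = v ∧ ∀ r, p < r → r ≤ q → v < h r := by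
  obtain ⟨p₀, hp₀⟩ := hex
  obtain ⟨p₁, hp₁, hp₁'⟩ := hh.periodic.exists_mem_Ico (by linarith [hh.pos]) p₀ (q - 2 * N)
  obtain ⟨p, ⟨hpq, hpv⟩, hmax⟩ := Int.exists_greatest_of_bdd (P := fun z ↦ z ≤ q ∧ h z ≤ v)
    ⟨q, fun z hz ↦ hz.1⟩ ⟨p₁, by linarith [hp₁.2], by rwa [← hp₁']⟩
  have habove (r : ℤ) (hpr : p < r) (hrq : r ≤ q) : v < h r := by
    by_contra! hr
    exact (hmax r ⟨hrq, hr⟩).not_gt hpr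
  have hne : p ≠ q := by rintro rfl; omega
  refine ⟨p, by omega, ?_, habove⟩
  have := habove (p + 1) (by omega) (by omega)
  have := hh.step p
  omega

end IsBridge

/-- The equivalence relation of a path: positions `x` and `y` are related when the path is at
the same height at the times `2 * x + 1` and `2 * y + 1` and never below it in between. -/
def levelSetoid (h : ℤ → ℤ) : Setoid ℤ where
  r x y := h (2 * x + 1) = h (2 * y + 1) ∧
    ∀ p ∈ Set.uIcc (2 * x + 1) (2 * y + 1), h (2 * x + 1) ≤ h p
  iseqv :=
    { refl := fun x ↦ by simp
      symm := fun hxy ↦ ⟨hxy.1.symm, by rw [Set.uIcc_comm, ← hxy.1]; exact hxy.2⟩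
      trans := fun {x y z} hxy hyz ↦ ⟨hxy.1.trans hyz.1, fun p hp ↦
        (Set.uIcc_subset_uIcc_union_uIcc (b := 2 * y + 1) hp).elim (hxy.2 p)
          fun hp ↦ hxy.1 ▸ hyz.2 p hp⟩ }

namespace levelSetoid

variable {N : ℤ} {h : ℤ → ℤ} {x y : ℤ}

theorem iff_of_le (hxy : x ≤ y) : levelSetoid h x y ↔ h (2 * x + 1) = h (2 * y + 1) ∧
    ∀ p, 2 * x + 1 ≤ p → p ≤ 2 * y + 1 → h (2 * x + 1) ≤ h p := by
  change _ ∧ (∀ p ∈ Set.uIcc (2 * x + 1) (2 * y + 1), _) ↔ _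
  simp only [Set.uIcc_of_le (show 2 * x + 1 ≤ 2 * y + 1 by omega), Set.mem_Icc, and_imp]

theorem comp_neg_iff : levelSetoid (fun p ↦ h (-p)) x y ↔ levelSetoid h (-1 - x) (-1 - y) := by
  have hodd (z : ℤ) : 2 * (-1 - z) + 1 = -(2 * z + 1) := by ring
  change (_ ∧ ∀ p ∈ _, _) ↔ (_ ∧ ∀ p ∈ _, _)
  rw [hodd, hodd, ← Set.neg_uIcc]
  exact and_congr_right fun _ ↦ ⟨fun H p hp ↦ by simpa using H (-p) hp,
    fun H p hp ↦ H (-p) (by simpa only [Set.mem_neg, neg_neg] using hp)⟩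

theorem add_right_iff {t : ℤ} (ht : Function.Periodic h (2 * t)) :
    levelSetoid h (x + t) (y + t) ↔ levelSetoid h x y := by
  have hodd (z : ℤ) : 2 * (z + t) + 1 = 2 * z + 1 + 2 * t := by ring
  change (_ ∧ ∀ p ∈ _, _) ↔ (_ ∧ ∀ p ∈ _, _)
  rw [hodd, hodd, ht, ht, ← Set.image_add_const_uIcc, Set.forall_mem_image]
  simp only [ht _]

theorem isPeriodicNoncrossing (hh : IsBridge N h) : IsPeriodicNoncrossing N (levelSetoid h) where
  pos := hh.pos
  noncrossing a b c d hab hbc hcd hac hbd := by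
    rw [iff_of_le (by omega)] at hac hbd ⊢
    have := hac.2 (2 * b + 1) (by omega) (by omega)
    have := hbd.2 (2 * c + 1) (by omega) (by omega)
    exact ⟨by omega, fun p hp hp' ↦ hac.2 p hp (by omega)⟩
  mem_translations _ _ := add_right_iff hh.periodic

theorem exists_lt_iff (hh : IsBridge N h) (x : ℤ) :
    (∃ y < x, levelSetoid h y x) ↔ h (2 * x + 1) = h (2 * x) - 1 := by
  constructor
  · rintro ⟨y, hy, hyx⟩
    have := ((iff_of_le hy.le).mp hyx).2 (2 * x) (by omega) (by omega)
    have := hh.step (2 * x)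
    have := ((iff_of_le hy.le).mp hyx).1
    omega
  · intro hx
    obtain ⟨p, hpx, hp, habove⟩ :=
      hh.exists_last_visit (q := 2 * x) (v := h (2 * x + 1)) (by omega) ⟨_, le_rfl⟩
    have := hh.two_dvd_sub p
    have := hh.two_dvd_sub (2 * x + 1)
    obtain ⟨y, rfl⟩ : ∃ y, p = 2 * y + 1 := ⟨p / 2, by omega⟩
    refine ⟨y, by omega, (iff_of_le (by omega)).mpr ⟨hp, fun r hr hr' ↦ ?_⟩⟩
    rcases hr.eq_or_lt with rfl | hr
    · exact le_rfl
    rcases hr'.eq_or_lt with rfl | hr'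
    · exact hp.le
    · exact hp ▸ (habove r hr (by omega)).le

theorem exists_gt_iff (hh : IsBridge N h) (x : ℤ) :
    (∃ y > x, levelSetoid h y x) ↔ h (2 * x + 2) = h (2 * x + 1) + 1 := by
  have hrev := exists_lt_iff hh.comp_neg (-1 - x)
  simp only [comp_neg_iff, sub_sub_cancel] at hrev
  rw [show -(2 * (-1 - x) + 1) = 2 * x + 1 by ring,
    show -(2 * (-1 - x)) = 2 * x + 2 by ring, eq_sub_iff_add_eq, eq_comm] at hrev
  rw [← hrev]
  exact ⟨fun ⟨y, hy, hyx⟩ ↦ ⟨-1 - y, by omega, by simpa using hyx⟩,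
    fun ⟨y, hy, hyx⟩ ↦ ⟨-1 - y, by omega, hyx⟩⟩

theorem injOn : Set.InjOn levelSetoid {h | IsBridge N h} := by
  intro h (hh : IsBridge N h) h' (hh' : IsBridge N h') heq
  have hstep (p : ℤ) : h (p + 1) - h p = h' (p + 1) - h' p := by
    have := hh.step p
    have := hh'.step p
    obtain ⟨x, rfl | rfl⟩ : ∃ x, p = 2 * x ∨ p = 2 * x + 1 := ⟨p / 2, by omega⟩
    · have hiff := (exists_lt_iff hh x).symm.trans (heq ▸ exists_lt_iff hh' x)
      omega
    · have hiff := (exists_gt_iff hh x).symm.trans (heq ▸ exists_gt_iff hh' x)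
      rw [show 2 * x + 1 + 1 = 2 * x + 2 by ring] at *
      omega
  funext p
  induction p using Int.induction_on with
  | zero => rw [hh.map_zero, hh'.map_zero]
  | succ i ih => have := hstep i; omega
  | pred i ih =>
    have := hstep (-i - 1)
    rw [sub_add_cancel] at this
    omega

theorem forall_not_iff_nonneg (hh : IsBridge N h) :
    (∀ x y, x < 0 → 0 ≤ y → ¬ levelSetoid h x y) ↔ ∀ p, 0 ≤ h p := by
  constructor
  · intro H
    by_contra! ⟨p, hp⟩
    obtain ⟨a, ha, hha, haboveL⟩ := hh.exists_last_visit (q := 0) (v := -1)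
      (by simp [hh.map_zero]) ⟨p, by omega⟩
    obtain ⟨b, hb, hhb, haboveR⟩ := hh.comp_neg.exists_last_visit (q := 0) (v := -1)
      (by simp [hh.map_zero]) ⟨-p, by simp only [neg_neg]; omega⟩
    have := hh.two_dvd_sub a
    have := hh.comp_neg.two_dvd_sub b
    obtain ⟨x, rfl⟩ : ∃ x, a = 2 * x + 1 := ⟨a / 2, by omega⟩
    obtain ⟨y, rfl⟩ : ∃ y, b = -(2 * y + 1) := ⟨-b / 2, by omega⟩
    rw [neg_neg] at hhb
    refine H x y (by omega) (by omega) ((iff_of_le (by omega)).mpr ⟨by omega, fun q hxq hqy ↦ ?_⟩)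
    rcases hxq.eq_or_lt with rfl | hxq
    · exact le_rfl
    rcases hqy.eq_or_lt with rfl | hqy
    · omega
    rcases le_total q 0 with hq | hq
    · have := haboveL q hxq hq
      omega
    · have := haboveR (-q) (by omega) (by omega)
      rw [neg_neg] at this
      omega
  · intro H x y hx hy hxy
    have h0 := ((iff_of_le (by omega)).mp hxy).2 0 (by omega) (by omega)
    have := hh.map_zero
    have := H (2 * x + 1)
    have := hh.two_dvd_sub (2 * x + 1)
    omega

theorem reflection_iff_even (hh : IsBridge N h) :
    (∀ x y, levelSetoid h (-1 - x) (-1 - y) ↔ levelSetoid h x y) ↔ ∀ p, h (-p) = h p := by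
  simp only [← comp_neg_iff]
  constructor
  · exact fun H ↦ congrFun (injOn hh.comp_neg hh (Setoid.ext H))
  · intro H x y
    rw [funext H]

end levelSetoid

theorem IsNoncrossingOnLine.eq_of_exists_iff {T T' : Setoid ℤ} (hT : IsNoncrossingOnLine T)
    (hT' : IsNoncrossingOnLine T') (hlt : ∀ x, (∃ y < x, T y x) ↔ ∃ y < x, T' y x)
    (hgt : ∀ x, (∃ y > x, T y x) ↔ ∃ y > x, T' y x) : T = T' := by
  -- Strong induction on `y - x`: if `x` and `y` are consecutive in their `T`-class, then the
  -- `T'`-neighbours of `y` on its left and of `x` on its right cannot lie strictly between them.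
  have step (T T' : Setoid ℤ) (hT' : IsNoncrossingOnLine T')
      (hlt : ∀ x, (∃ y < x, T y x) → ∃ y < x, T' y x)
      (hgt : ∀ x, (∃ y > x, T y x) → ∃ y > x, T' y x) (x y : ℤ) (hxy : x < y)
      (ih : ∀ u v, u < v → v - u < y - x → (T u v ↔ T' u v)) (hTxy : T x y) : T' x y := by
    by_cases hmid : ∃ z, x < z ∧ z < y ∧ T x z
    · obtain ⟨z, hxz, hzy, hTxz⟩ := hmid
      exact T'.trans ((ih x z hxz (by omega)).mp hTxz)
        ((ih z y hzy (by omega)).mp (T.trans (T.symm hTxz) hTxy))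
    push Not at hmid
    obtain ⟨z, hzy, hz⟩ := hlt y ⟨x, hxy, hTxy⟩
    obtain ⟨w, hxw, hw⟩ := hgt x ⟨y, hxy, T.symm hTxy⟩
    rcases lt_trichotomy z x with hzx | rfl | hxz
    · rcases lt_trichotomy w y with hwy | rfl | hyw
      · exact absurd ((ih x w hxw (by omega)).mpr (T'.symm hw)) (hmid w hxw hwy)
      · exact T'.symm hw
      · exact T'.trans (T'.symm (hT' hzx hxy hyw hz (T'.symm hw))) hz
    · exact hz
    · exact absurd (T.trans hTxy (T.symm ((ih z y hzy (by omega)).mpr hz))) (hmid z hxz hzy)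
  have main (n : ℕ) : ∀ x y, x < y → (y - x).toNat = n → (T x y ↔ T' x y) := by
    induction n using Nat.strong_induction_on with
    | _ n ih =>
      intro x y hxy hn
      have ih' (u v : ℤ) (huv : u < v) (hlen : v - u < y - x) : T u v ↔ T' u v :=
        ih (v - u).toNat (by omega) u v huv rfl
      exact ⟨step T T' hT' (fun x ↦ (hlt x).mp) (fun x ↦ (hgt x).mp) x y hxy ih',
        step T' T hT (fun x ↦ (hlt x).mpr) (fun x ↦ (hgt x).mpr) x y hxy
          fun u v huv hlen ↦ (ih' u v huv hlen).symm⟩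
  ext x y
  rcases lt_trichotomy x y with hxy | rfl | hyx
  · exact main _ x y hxy rfl
  · exact iff_of_true (T.refl x) (T'.refl x)
  · rw [T.comm', T'.comm', main _ y x hyx rfl]

/-- The classes of `T` with an element before the gap to the left of `x` and one after it. -/
def straddling (T : Setoid ℤ) (x : ℤ) : Set (Quotient T) :=
  {q | (∃ a < x, ⟦a⟧ = q) ∧ ∃ b ≥ x, ⟦b⟧ = q}

section Straddling

variable {T : Setoid ℤ} {N : ℤ}

theorem mk_mem_straddling {x c : ℤ} :
    ⟦c⟧ ∈ straddling T x ↔ (∃ a < x, T a c) ∧ ∃ b ≥ x, T b c := by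
  simp only [straddling, Set.mem_ofPred_eq, Quotient.eq]

theorem mk_mem_straddling_self_iff (x : ℤ) : ⟦x⟧ ∈ straddling T x ↔ ∃ y < x, T y x :=
  mk_mem_straddling.trans (and_iff_left ⟨x, le_rfl, T.refl x⟩)

theorem mk_mem_straddling_add_one_iff (x : ℤ) :
    ⟦x⟧ ∈ straddling T (x + 1) ↔ ∃ y > x, T y x :=
  mk_mem_straddling.trans (and_iff_right ⟨x, lt_add_one x, T.refl x⟩)

theorem straddling_add_one_diff (x : ℤ) :
    straddling T (x + 1) \ {⟦x⟧} = straddling T x \ {⟦x⟧} := by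
  ext q
  refine and_congr_left fun hq ↦ ⟨fun ⟨⟨a, ha, haq⟩, b, hb, hbq⟩ ↦ ?_,
    fun ⟨⟨a, ha, haq⟩, b, hb, hbq⟩ ↦ ?_⟩
  · have : a ≠ x := by rintro rfl; exact hq haq.symm
    exact ⟨⟨a, by omega, haq⟩, b, by omega, hbq⟩
  · have : b ≠ x := by rintro rfl; exact hq hbq.symm
    exact ⟨⟨a, by omega, haq⟩, b, by omega, hbq⟩

theorem IsPeriodicNoncrossing.finite_straddling (hT : IsPeriodicNoncrossing N T) (x : ℤ) :
    (straddling T x).Finite := by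
  refine ((Set.finite_Ico (x - N) x).image Quotient.mk'').subset ?_
  rintro q ⟨⟨a, hax, rfl⟩, b, hbx, hb⟩
  have hab : T a b := T.symm (Quotient.exact hb)
  rcases le_or_gt (x - N) a with ha | ha
  · exact ⟨a, ⟨ha, hax⟩, rfl⟩
  obtain ⟨j, ⟨hj₁, hj₂⟩, -⟩ := existsUnique_add_zsmul_mem_Ico hT.pos a (x - N)
  have hshift : T (a + j • N) (b + j • N) :=
    (zsmul_mem hT.mem_translations j a b).mpr hab
  exact ⟨a + j • N, ⟨hj₁, by linarith⟩, Quotient.sound (T.symm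
    (hT.noncrossing (by linarith) (by linarith) (by linarith) hab hshift))⟩

theorem exists_lt_add_iff (ht : N ∈ translations T) (x c : ℤ) :
    (∃ y < x + N, T y (c + N)) ↔ ∃ y < x, T y c := by
  rw [(Equiv.addRight N).surjective.exists]
  simp [mem_translations.mp ht]

theorem exists_ge_add_iff (ht : N ∈ translations T) (x c : ℤ) :
    (∃ y ≥ x + N, T y (c + N)) ↔ ∃ y ≥ x, T y c := by
  rw [(Equiv.addRight N).surjective.exists]
  simp [mem_translations.mp ht]

theorem ncard_straddling_add (ht : N ∈ translations T) (x : ℤ) :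
    (straddling T (x + N)).ncard = (straddling T x).ncard := by
  let e : Quotient T ≃ Quotient T :=
    Quotient.congr (Equiv.addRight N) fun a b ↦ (ht a b).symm
  rw [← Set.ncard_image_of_injective (straddling T x) e.injective]
  congr 1
  refine Set.ext (e.surjective.forall.mpr (Quotient.ind fun c ↦ ?_))
  rw [e.injective.mem_set_image, mk_mem_straddling, ← exists_lt_add_iff ht,
    ← exists_ge_add_iff ht]
  exact mk_mem_straddling

open Classical in
theorem ncard_straddling (hT : IsPeriodicNoncrossing N T) (x : ℤ) :
    (straddling T x).ncard =
      (straddling T x \ {⟦x⟧}).ncard + if ∃ y < x, T y x then 1 else 0 := by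
  rw [← mk_mem_straddling_self_iff]
  split_ifs with hx
  · rw [Set.ncard_sdiff_singleton_add_one hx (hT.finite_straddling x)]
  · rw [Set.sdiff_singleton_eq_self hx, add_zero]

open Classical in
theorem ncard_straddling_add_one (hT : IsPeriodicNoncrossing N T) (x : ℤ) :
    (straddling T (x + 1)).ncard =
      (straddling T x \ {⟦x⟧}).ncard + if ∃ y > x, T y x then 1 else 0 := by
  rw [← straddling_add_one_diff, ← mk_mem_straddling_add_one_iff]
  split_ifs with hx
  · rw [Set.ncard_sdiff_singleton_add_one hx (hT.finite_straddling _)]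
  · rw [Set.sdiff_singleton_eq_self hx, add_zero]

end Straddling

/-- The path whose relation is `T`: up to normalization at `0`, the height at an even time
`2 * x` is twice the number of classes straddling the gap to the left of `x`, and the height at
`2 * x + 1` is one more than twice the number of classes passing over `x`. -/
noncomputable def height (T : Setoid ℤ) (p : ℤ) : ℤ :=
  (if Even p then 2 * ((straddling T (p / 2)).ncard : ℤ)
    else 2 * ((straddling T (p / 2) \ {⟦p / 2⟧}).ncard : ℤ) + 1) - 2 * (straddling T 0).ncard

section Height

variable {T : Setoid ℤ} {N : ℤ}

theorem height_two_mul (x : ℤ) :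
    height T (2 * x) = 2 * (straddling T x).ncard - 2 * (straddling T 0).ncard := by
  rw [height, if_pos (even_two_mul x), Int.mul_ediv_cancel_left x two_ne_zero]

theorem height_two_mul_add_one (x : ℤ) : height T (2 * x + 1) =
    2 * (straddling T x \ {⟦x⟧}).ncard + 1 - 2 * (straddling T 0).ncard := by
  rw [height, if_neg (by simp), show (2 * x + 1) / 2 = x by omega]

open Classical in
theorem height_two_mul_add_one_eq (hT : IsPeriodicNoncrossing N T) (x : ℤ) :
    height T (2 * x + 1) = height T (2 * x) + if ∃ y < x, T y x then -1 else 1 := by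
  have := ncard_straddling hT x
  rw [height_two_mul, height_two_mul_add_one]
  split_ifs at this ⊢ <;> omega

open Classical in
theorem height_two_mul_add_two_eq (hT : IsPeriodicNoncrossing N T) (x : ℤ) :
    height T (2 * x + 2) = height T (2 * x + 1) + if ∃ y > x, T y x then 1 else -1 := by
  have := ncard_straddling_add_one hT x
  rw [show 2 * x + 2 = 2 * (x + 1) by ring, height_two_mul, height_two_mul_add_one]
  split_ifs at this ⊢ <;> omega

open Classical in
theorem isBridge_height (hT : IsPeriodicNoncrossing N T) : IsBridge N (height T) := by
  have hodd (x : ℤ) := height_two_mul_add_one_eq hT x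
  have heven (x : ℤ) : height T (2 * (x + N)) = height T (2 * x) := by
    rw [height_two_mul, height_two_mul, ncard_straddling_add hT.mem_translations]
  refine ⟨hT.pos, by simpa using height_two_mul (T := T) 0, fun p ↦ ?_, fun p ↦ ?_⟩
  · obtain ⟨x, rfl | rfl⟩ := Int.even_or_odd' p
    · rw [hodd]
      split_ifs <;> omega
    · rw [show 2 * x + 1 + 1 = 2 * x + 2 by ring, height_two_mul_add_two_eq hT]
      split_ifs <;> omega
  · obtain ⟨x, rfl | rfl⟩ := Int.even_or_odd' p
    · rw [← mul_add, heven]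
    · rw [add_right_comm, ← mul_add, hodd, hodd, heven]
      rw [if_congr (exists_lt_add_iff hT.mem_translations x x) rfl rfl]

theorem levelSetoid_height (hT : IsPeriodicNoncrossing N T) : levelSetoid (height T) = T := by
  have hh := isBridge_height hT
  refine (levelSetoid.isPeriodicNoncrossing hh).noncrossing.eq_of_exists_iff hT.noncrossing
    (fun x ↦ ?_) fun x ↦ ?_
  · rw [levelSetoid.exists_lt_iff hh, height_two_mul_add_one_eq hT]
    split_ifs with hx
    · exact iff_of_true rfl hx
    · exact iff_of_false (by omega) hx
  · rw [levelSetoid.exists_gt_iff hh, height_two_mul_add_two_eq hT]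
    split_ifs with hx
    · exact iff_of_true rfl hx
    · exact iff_of_false (by omega) hx

end Height

theorem card_isPeriodicNoncrossing_eq {N : ℤ} {p : Setoid ℤ → Prop} {q : (ℤ → ℤ) → Prop}
    (hpq : ∀ h, IsBridge N h → (p (levelSetoid h) ↔ q h)) :
    Nat.card {T // IsPeriodicNoncrossing N T ∧ p T} = Nat.card {h // IsBridge N h ∧ q h} := by
  symm
  refine Nat.card_congr (Equiv.ofBijective
    (fun h ↦ ⟨levelSetoid h, levelSetoid.isPeriodicNoncrossing h.2.1, (hpq _ h.2.1).mpr h.2.2⟩)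
    ⟨fun h h' heq ↦ ?_, fun ⟨T, hT, hpT⟩ ↦ ?_⟩)
  · exact Subtype.ext (levelSetoid.injOn h.2.1 h'.2.1 (congrArg Subtype.val heq))
  · have hh := isBridge_height hT
    exact ⟨⟨height T, hh, (hpq _ hh).mp (by rwa [levelSetoid_height hT])⟩,
      Subtype.ext (levelSetoid_height hT)⟩

/-! ### Counting walks -/

/-- A `±1` walk of length `L` from `a`, all of whose positions satisfy `S` and whose endpoint
satisfies `E`. It is encoded as a function on `ℕ` that is constant from time `L` on. -/
structure IsWalk (S E : ℤ → Prop) (L : ℕ) (a : ℤ) (g : ℕ → ℤ) : Prop where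
  map_zero : g 0 = a
  step (p : ℕ) : p < L → g (p + 1) = g p + 1 ∨ g (p + 1) = g p - 1
  property (p : ℕ) : p ≤ L → S (g p)
  property_last : E (g L)
  eq_last (p : ℕ) : L ≤ p → g p = g L

open Classical in
/-- The number of walks in the sense of `IsWalk`, computed by deleting the first step. -/
noncomputable def walkCount (S E : ℤ → Prop) : ℕ → ℤ → ℕ
  | 0, a => if S a ∧ E a then 1 else 0
  | L + 1, a => if S a then walkCount S E L (a + 1) + walkCount S E L (a - 1) else 0

/-- The walk that starts at `a` and continues along `g`. -/
def consWalk (a : ℤ) (g : ℕ → ℤ) : ℕ → ℤ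
  | 0 => a
  | p + 1 => g p

theorem consWalk_injective (a : ℤ) : Function.Injective (consWalk a) :=
  fun _ _ heq ↦ funext fun p ↦ congrFun heq (p + 1)

section Count

variable {S E : ℤ → Prop} {L : ℕ} {a : ℤ}

theorem isWalk_zero_iff {g : ℕ → ℤ} :
    IsWalk S E 0 a g ↔ (S a ∧ E a) ∧ g = fun _ ↦ a := by
  constructor
  · intro hg
    have hconst : g = fun _ ↦ a := funext fun p ↦ (hg.eq_last p p.zero_le).trans hg.map_zero
    subst hconst
    exact ⟨⟨hg.property 0 le_rfl, hg.property_last⟩, rfl⟩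
  · rintro ⟨⟨hS, hE⟩, rfl⟩
    exact ⟨rfl, fun p hp ↦ absurd hp p.not_lt_zero, fun _ _ ↦ hS, hE, fun _ _ ↦ rfl⟩

theorem isWalk_consWalk_iff {g : ℕ → ℤ} :
    IsWalk S E (L + 1) a (consWalk a g) ↔
      S a ∧ (IsWalk S E L (a + 1) g ∨ IsWalk S E L (a - 1) g) := by
  constructor
  · intro hg
    have htail (b : ℤ) (hb : g 0 = b) : IsWalk S E L b g :=
      ⟨hb, fun p hp ↦ hg.step (p + 1) (by omega), fun p hp ↦ hg.property (p + 1) (by omega),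
        hg.property_last, fun p hp ↦ hg.eq_last (p + 1) (by omega)⟩
    exact ⟨hg.property 0 (Nat.zero_le _), (hg.step 0 L.succ_pos).imp (htail _) (htail _)⟩
  · rintro ⟨hS, hg⟩
    have hcons (b : ℤ) (hb : b = a + 1 ∨ b = a - 1) (hg : IsWalk S E L b g) :
        IsWalk S E (L + 1) a (consWalk a g) := by
      refine ⟨rfl, fun p hp ↦ ?_, fun p hp ↦ ?_, hg.property_last, fun p hp ↦ ?_⟩
      · cases p with
        | zero => rw [← hg.map_zero] at hb; exact hb
        | succ p => exact hg.step p (by omega)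
      · cases p with
        | zero => exact hS
        | succ p => exact hg.property p (by omega)
      · cases p with
        | zero => omega
        | succ p => exact hg.eq_last p (by omega)
    exact hg.elim (hcons _ (Or.inl rfl)) (hcons _ (Or.inr rfl))

theorem IsWalk.eq_consWalk {g : ℕ → ℤ} (hg : IsWalk S E L a g) :
    g = consWalk a fun p ↦ g (p + 1) := by
  funext p
  cases p with
  | zero => exact hg.map_zero
  | succ p => rfl

theorem setOf_isWalk_succ (hS : S a) : {g | IsWalk S E (L + 1) a g} =
    consWalk a '' ({g | IsWalk S E L (a + 1) g} ∪ {g | IsWalk S E L (a - 1) g}) := by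
  ext g
  constructor
  · intro (hg : IsWalk S E (L + 1) a g)
    refine ⟨fun p ↦ g (p + 1), ?_, hg.eq_consWalk.symm⟩
    rw [hg.eq_consWalk, isWalk_consWalk_iff] at hg
    exact hg.2
  · rintro ⟨g, hg, rfl⟩
    exact isWalk_consWalk_iff.mpr ⟨hS, hg⟩

variable (S E L a)

theorem encard_setOf_isWalk : {g | IsWalk S E L a g}.encard = walkCount S E L a := by
  induction L generalizing a with
  | zero =>
    simp only [isWalk_zero_iff, walkCount]
    split_ifs with h
    · simp [h]
    · simp [h]
  | succ L ih =>
    rw [walkCount]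
    split_ifs with hS
    · have hdisj : Disjoint {g | IsWalk S E L (a + 1) g} {g | IsWalk S E L (a - 1) g} := by
        refine Set.disjoint_left.mpr fun g (hg : IsWalk _ _ _ _ g) (hg' : IsWalk _ _ _ _ g) ↦ ?_
        have := hg.map_zero.symm.trans hg'.map_zero
        omega
      rw [setOf_isWalk_succ hS, (consWalk_injective a).encard_image, Set.encard_union_eq hdisj,
        ih, ih, Nat.cast_add]
    · have hempty : {g | IsWalk S E (L + 1) a g} = ∅ :=
        Set.eq_empty_iff_forall_notMem.mpr fun g (hg : IsWalk _ _ _ _ g) ↦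
          hS (hg.map_zero ▸ hg.property 0 (Nat.zero_le _))
      rw [hempty, Set.encard_empty, Nat.cast_zero]

theorem card_isWalk : Nat.card {g // IsWalk S E L a g} = walkCount S E L a := by
  have := congrArg ENat.toNat (encard_setOf_isWalk S E L a)
  rwa [ENat.toNat_natCast] at this

end Count

theorem walkCount_succ_of_pos {S E : ℤ → Prop} {a : ℤ} (L : ℕ) (ha : S a) :
    walkCount S E (L + 1) a = walkCount S E L (a + 1) + walkCount S E L (a - 1) :=
  if_pos ha

theorem walkCount_of_not {S E : ℤ → Prop} {a : ℤ} (L : ℕ) (ha : ¬ S a) :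
    walkCount S E L a = 0 := by
  cases L <;> simp [walkCount, ha]

/-- The number of `±1` walks of length `L` from `y` to `0`. -/
noncomputable abbrev freeWalkCount : ℕ → ℤ → ℕ := walkCount (fun _ ↦ True) (· = 0)

theorem freeWalkCount_succ (L : ℕ) (y : ℤ) :
    freeWalkCount (L + 1) y = freeWalkCount L (y + 1) + freeWalkCount L (y - 1) :=
  walkCount_succ_of_pos L trivial

theorem freeWalkCount_neg (L : ℕ) (y : ℤ) : freeWalkCount L (-y) = freeWalkCount L y := by
  induction L generalizing y with
  | zero => simp [freeWalkCount, walkCount]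
  | succ L ih =>
    rw [freeWalkCount_succ, freeWalkCount_succ, ← ih (y + 1), ← ih (y - 1), add_comm]
    congr 2 <;> ring

theorem freeWalkCount_of_lt_neg {L : ℕ} {y : ℤ} (hy : y < -L) : freeWalkCount L y = 0 := by
  induction L generalizing y with
  | zero => simp only [freeWalkCount, walkCount]; rw [if_neg]; omega
  | succ L ih => rw [freeWalkCount_succ, ih (by omega), ih (by omega)]

theorem freeWalkCount_of_odd {L : ℕ} {y : ℤ} (hy : Odd (y - L)) : freeWalkCount L y = 0 := by
  rw [Int.odd_iff] at hy
  induction L generalizing y with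
  | zero => simp only [freeWalkCount, walkCount]; rw [if_neg]; omega
  | succ L ih => rw [freeWalkCount_succ, ih (by omega), ih (by omega)]

theorem freeWalkCount_eq_choose (L i : ℕ) : freeWalkCount L (2 * i - L) = L.choose i := by
  induction L generalizing i with
  | zero =>
    cases i with
    | zero => simp [freeWalkCount, walkCount]
    | succ i => simp only [freeWalkCount, walkCount]; rw [if_neg (by omega), Nat.choose_zero_succ]
  | succ L ih =>
    rw [freeWalkCount_succ, show 2 * (i : ℤ) - (L + 1 : ℕ) + 1 = 2 * i - L by push_cast; ring, ih]
    cases i with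
    | zero => rw [freeWalkCount_of_lt_neg (by omega)]; simp
    | succ i =>
      rw [show 2 * ((i + 1 : ℕ) : ℤ) - (L + 1 : ℕ) - 1 = 2 * i - L by push_cast; ring, ih,
        Nat.choose_succ_succ, add_comm]

/-- The reflection principle. -/
theorem walkCount_nonneg_closed_add (L : ℕ) {a : ℤ} (ha : -1 ≤ a) :
    walkCount (0 ≤ ·) (· = 0) L a + freeWalkCount L (a + 2) = freeWalkCount L a := by
  induction L generalizing a with
  | zero =>
    simp only [freeWalkCount, walkCount, true_and]
    split_ifs <;> omega
  | succ L ih =>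
    obtain rfl | ha := ha.eq_or_lt
    · rw [walkCount_of_not _ (by norm_num), zero_add]
      exact (freeWalkCount_neg _ _).symm
    · have hup := ih (a := a + 1) (by omega)
      have hdown := ih (a := a - 1) (by omega)
      rw [show a + 1 + 2 = a + 2 + 1 by ring] at hup
      rw [show a - 1 + 2 = a + 2 - 1 by ring] at hdown
      rw [walkCount_succ_of_pos L (by omega), freeWalkCount_succ, freeWalkCount_succ]
      omega

theorem walkCount_nonneg_free_eq (L : ℕ) {a : ℤ} (ha : 0 ≤ a) :
    walkCount (0 ≤ ·) (fun _ ↦ True) L a =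
      walkCount (0 ≤ ·) (fun _ ↦ True) L (a - 1) +
        (freeWalkCount L a + freeWalkCount L (a + 1)) := by
  induction L generalizing a with
  | zero =>
    simp only [freeWalkCount, walkCount, true_and, and_true]
    split_ifs <;> omega
  | succ L ih =>
    have hup := ih (a := a + 1) (by omega)
    rw [add_sub_cancel_right] at hup
    rw [walkCount_succ_of_pos L ha, freeWalkCount_succ, freeWalkCount_succ, add_sub_cancel_right,
      hup]
    obtain rfl | ha := ha.eq_or_lt
    · have hzero := ih (a := 0) le_rfl
      rw [walkCount_of_not (a := 0 - 1) L (by norm_num), zero_add] at hzero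
      rw [walkCount_of_not (a := 0 - 1) L (by norm_num),
        walkCount_of_not (a := 0 - 1) (L + 1) (by norm_num), hzero, zero_sub, freeWalkCount_neg]
      ring_nf
    · have hdown := ih (a := a - 1) (by omega)
      rw [sub_add_cancel] at hdown
      rw [hdown, walkCount_succ_of_pos L (a := a - 1) (by omega), sub_add_cancel]
      ring

theorem freeWalkCount_two_mul_zero (k : ℕ) : freeWalkCount (2 * k) 0 = (2 * k).choose k := by
  rw [← freeWalkCount_eq_choose]
  congr 1
  push_cast
  ring

theorem walkCount_dyck (n : ℕ) : walkCount (0 ≤ ·) (· = 0) (2 * n) 0 = catalan n := by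
  have hreflect := walkCount_nonneg_closed_add (2 * n) (a := 0) (by norm_num)
  have htwo := freeWalkCount_eq_choose (2 * n) (n + 1)
  rw [show 2 * ((n + 1 : ℕ) : ℤ) - (2 * n : ℕ) = 0 + 2 by push_cast; ring] at htwo
  rw [freeWalkCount_two_mul_zero, htwo] at hreflect
  have hchoose := Nat.choose_succ_right_eq (2 * n) n
  have hcatalan := succ_mul_catalan_eq_centralBinom n
  rw [Nat.centralBinom_eq_two_mul_choose] at hcatalan
  rw [show 2 * n - n = n by omega] at hchoose
  apply Nat.eq_of_mul_eq_mul_left n.succ_pos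
  nlinarith

theorem walkCount_nonneg_free (m : ℕ) :
    walkCount (0 ≤ ·) (fun _ ↦ True) (2 * m + 1) 0 = (2 * m + 1).choose m := by
  rw [walkCount_nonneg_free_eq _ le_rfl, walkCount_of_not _ (by norm_num),
    freeWalkCount_of_odd (by rw [Int.odd_iff]; omega), zero_add, zero_add, zero_add,
    ← Nat.choose_symm_half, ← freeWalkCount_eq_choose]
  congr 1
  push_cast
  ring

/-! ### Counting bridges by folding the line onto an interval -/

theorem card_isBridge_eq_walkCount {N : ℤ} {L : ℕ} {S E : ℤ → Prop} {q : (ℤ → ℤ) → Prop}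
    {ρ : ℤ → ℕ} (hρ : ∀ p, ρ p ≤ L)
    (hfold : ∀ h, IsBridge N h → q h → (∀ p, S (h p)) ∧ E (h L) ∧ ∀ p, h (ρ p) = h p)
    (hunfold : ∀ g, IsWalk S E L 0 g →
      IsBridge N (g ∘ ρ) ∧ q (g ∘ ρ) ∧ ∀ p ≤ L, g (ρ p) = g p) :
    Nat.card {h // IsBridge N h ∧ q h} = walkCount S E L 0 := by
  rw [← card_isWalk]
  refine Nat.card_congr
    { toFun := fun h ↦ ⟨fun p ↦ h.1 (min p L : ℕ), ?_⟩
      invFun := fun g ↦ ⟨g.1 ∘ ρ, (hunfold g.1 g.2).1, (hunfold g.1 g.2).2.1⟩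
      left_inv := ?_
      right_inv := ?_ }
  · obtain ⟨h, hh, hq⟩ := h
    obtain ⟨hS, hE, -⟩ := hfold h hh hq
    refine ⟨by simpa using hh.map_zero, fun p hp ↦ ?_, fun p _ ↦ hS _, by simpa using hE,
      fun p hp ↦ by simp [hp]⟩
    simpa [hp.le, Nat.succ_le_of_lt hp] using hh.step p
  · rintro ⟨h, hh, hq⟩
    refine Subtype.ext (funext fun p ↦ ?_)
    simpa [hρ p] using (hfold h hh hq).2.2 p
  · rintro ⟨g, hg⟩
    refine Subtype.ext (funext fun p ↦ ?_)
    have hmin := (hunfold g hg).2.2 (min p L) (min_le_right p L)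
    change g (ρ (min p L : ℕ)) = g p
    rw [hmin]
    rcases le_total p L with hp | hp
    · rw [min_eq_left hp]
    · rw [min_eq_right hp, hg.eq_last p hp]

theorem map_emod_of_periodic {α : Type*} {f : ℤ → α} {M : ℤ} (hf : Function.Periodic f M) (p : ℤ) :
    f (p % M) = f p := by
  rw [Int.emod_def, mul_comm]
  exact hf.sub_int_mul_eq _

theorem add_one_emod_eq {M : ℤ} (hM : 0 < M) (p : ℤ) :
    (p + 1) % M = if p % M + 1 = M then 0 else p % M + 1 := by
  have hnonneg := Int.emod_nonneg p hM.ne'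
  have hlt := Int.emod_lt_of_pos p hM
  rw [← Int.emod_add_emod]
  split_ifs with hp
  · rw [hp, Int.emod_self]
  · exact Int.emod_eq_of_lt (by omega) (by omega)

theorem card_isBridge_forall {N : ℕ} (hN : 0 < N) (S : ℤ → Prop) :
    Nat.card {h // IsBridge N h ∧ ∀ p, S (h p)} = walkCount S (· = 0) (2 * N) 0 := by
  have hM : (0 : ℤ) < 2 * N := by omega
  have hnonneg (p : ℤ) := Int.emod_nonneg p hM.ne'
  have hlt (p : ℤ) := Int.emod_lt_of_pos p hM
  refine card_isBridge_eq_walkCount (ρ := fun p ↦ (p % (2 * N)).toNat)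
    (fun p ↦ by have := hlt p; omega) (fun h hh hS ↦ ⟨hS, ?_, fun p ↦ ?_⟩)
    fun g hg ↦ ⟨⟨by omega, ?_, fun p ↦ ?_, fun p ↦ ?_⟩, fun p ↦ ?_, fun p hp ↦ ?_⟩
  · simpa [hh.map_zero] using hh.periodic 0
  · rw [Int.toNat_of_nonneg (hnonneg p), map_emod_of_periodic hh.periodic]
  · simpa using hg.map_zero
  · have hstep := hg.step (p % (2 * N)).toNat (by have := hlt p; omega)
    simp only [Function.comp_apply, add_one_emod_eq hM p]
    split_ifs with hp
    · rw [show (p % (2 * N)).toNat + 1 = 2 * N by omega, hg.property_last] at hstep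
      rwa [Int.toNat_zero, hg.map_zero]
    · rwa [Int.toNat_add (hnonneg p) zero_le_one]
  · simp
  · exact hg.property _ (by have := hlt p; dsimp only; omega)
  · obtain hp | rfl := hp.lt_or_eq
    · rw [Int.emod_eq_of_lt (by omega) (by omega), Int.toNat_natCast]
    · simp [hg.map_zero, hg.property_last]

/-- The distance from `p` to the nearest multiple of `2 * N`. -/
def foldedTime (N p : ℤ) : ℕ := (min (p % (2 * N)) (2 * N - p % (2 * N))).toNat

section FoldedTime

variable {N : ℤ}

theorem foldedTime_le (hN : 0 < N) (p : ℤ) : foldedTime N p ≤ N := by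
  have := Int.emod_nonneg p (show 2 * N ≠ 0 by omega)
  rw [foldedTime]
  omega

theorem foldedTime_natCast {p : ℕ} (hN : 0 < N) (hp : p ≤ N) : foldedTime N p = p := by
  rw [foldedTime, Int.emod_eq_of_lt (by omega) (by omega)]
  omega

theorem foldedTime_neg (hN : 0 < N) (p : ℤ) : foldedTime N (-p) = foldedTime N p := by
  have hnonneg := Int.emod_nonneg p (show 2 * N ≠ 0 by omega)
  have hlt := Int.emod_lt_of_pos p (show 0 < 2 * N by omega)
  rw [foldedTime, foldedTime, Int.neg_emod]
  split_ifs with hp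
  · rw [Int.dvd_iff_emod_eq_zero] at hp
    omega
  · rw [Int.dvd_iff_emod_eq_zero] at hp
    omega

theorem foldedTime_add_one (hN : 0 < N) (p : ℤ) :
    (foldedTime N (p + 1) = foldedTime N p + 1 ∧ foldedTime N p < N) ∨
      (foldedTime N p = foldedTime N (p + 1) + 1 ∧ foldedTime N (p + 1) < N) := by
  have hnonneg := Int.emod_nonneg p (show 2 * N ≠ 0 by omega)
  have hlt := Int.emod_lt_of_pos p (show 0 < 2 * N by omega)
  rw [foldedTime, foldedTime, add_one_emod_eq (by omega)]
  split_ifs with hp <;> omega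

theorem IsBridge.map_foldedTime {h : ℤ → ℤ} (hh : IsBridge N h) (heven : ∀ p, h (-p) = h p)
    (p : ℤ) : h (foldedTime N p) = h p := by
  have hN := hh.pos
  have hnonneg := Int.emod_nonneg p (show 2 * N ≠ 0 by omega)
  have hlt := Int.emod_lt_of_pos p (show 0 < 2 * N by omega)
  rw [foldedTime, Int.toNat_of_nonneg (by omega), ← map_emod_of_periodic hh.periodic p]
  rcases min_choice (p % (2 * N)) (2 * N - p % (2 * N)) with hmin | hmin
  · rw [hmin]
  · rw [hmin, hh.periodic.sub_eq', heven]

end FoldedTime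

theorem card_isBridge_even_forall {N : ℕ} (hN : 0 < N) (S : ℤ → Prop) :
    Nat.card {h // IsBridge N h ∧ (∀ p, S (h p)) ∧ ∀ p, h (-p) = h p} =
      walkCount S (fun _ ↦ True) N 0 := by
  have hN' : (0 : ℤ) < N := by omega
  have hle (p : ℤ) : foldedTime N p ≤ N := by exact_mod_cast foldedTime_le hN' p
  refine card_isBridge_eq_walkCount hle
    (fun h hh hq ↦ ⟨hq.1, trivial, hh.map_foldedTime hq.2⟩)
    fun g hg ↦ ⟨⟨hN', ?_, fun p ↦ ?_, fun p ↦ ?_⟩,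
      ⟨fun p ↦ hg.property _ (hle p), fun p ↦ ?_⟩, fun p hp ↦ ?_⟩
  · simpa [foldedTime] using hg.map_zero
  · rcases foldedTime_add_one hN' p with ⟨hp, hlt⟩ | ⟨hp, hlt⟩
    · simpa only [Function.comp_apply, hp] using hg.step _ (by omega)
    · have := hg.step (foldedTime N (p + 1)) (by omega)
      simp only [Function.comp_apply, hp]
      omega
  · simp [foldedTime]
  · simp only [Function.comp_apply, foldedTime_neg hN']
  · rw [foldedTime_natCast hN' (by omega)]

theorem card_isBridge {k : ℕ} (hk : 0 < k) : Nat.card {h // IsBridge k h} = (2 * k).choose k := by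
  simpa [freeWalkCount_two_mul_zero] using card_isBridge_forall hk fun _ ↦ True

theorem card_isBridge_nonneg {n : ℕ} (hn : 0 < n) :
    Nat.card {h // IsBridge n h ∧ ∀ p, 0 ≤ h p} = catalan n := by
  rw [card_isBridge_forall hn (0 ≤ ·), walkCount_dyck]

theorem card_isBridge_even_nonneg (m : ℕ) :
    Nat.card {h // IsBridge (2 * m + 1 : ℕ) h ∧ (∀ p, 0 ≤ h p) ∧ ∀ p, h (-p) = h p} =
      (2 * m + 1).choose m := by
  rw [card_isBridge_even_forall (Nat.succ_pos _) (0 ≤ ·), walkCount_nonneg_free]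

/-! ### Noncrossing partitions of `ℤ/nℤ` as relations on `ℤ` -/

section FinpartitionUniv

variable {α : Type*} [Fintype α] [DecidableEq α]

theorem mem_part_univ_iff (π : Finpartition (Finset.univ : Finset α)) {x y : α} :
    x ∈ π.part y ↔ π.part x = π.part y :=
  π.mem_part_iff_part_eq_part (Finset.mem_univ x) (Finset.mem_univ y)

theorem part_mem_parts_univ (π : Finpartition (Finset.univ : Finset α)) (x : α) :
    π.part x ∈ π.parts :=
  π.part_mem.mpr (Finset.mem_univ x)

theorem coe_parts_eq_range_part (π : Finpartition (Finset.univ : Finset α)) :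
    (π.parts : Set (Finset α)) = Set.range π.part := by
  ext B
  constructor
  · intro hB
    obtain ⟨x, hx⟩ := π.nonempty_of_mem_parts hB
    exact ⟨x, π.part_eq_of_mem hB hx⟩
  · rintro ⟨x, rfl⟩
    exact part_mem_parts_univ π x

theorem ker_part_injective :
    Function.Injective fun π : Finpartition (Finset.univ : Finset α) ↦ Setoid.ker π.part := by
  intro π π' heq
  have hpart : π.part = π'.part := by
    ext x y
    rw [mem_part_univ_iff, mem_part_univ_iff]
    exact iff_of_eq (congrArg (fun r : Setoid α ↦ r y x) heq)
  refine Finpartition.ext (Finset.coe_injective ?_)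
  rw [coe_parts_eq_range_part, coe_parts_eq_range_part, hpart]

theorem exists_ker_part_eq (r : Setoid α) :
    ∃ π : Finpartition (Finset.univ : Finset α), Setoid.ker π.part = r := by
  classical
  refine ⟨Finpartition.ofSetoid r, ?_⟩
  ext x y
  rw [Setoid.ker_def, ← mem_part_univ_iff, Finpartition.mem_part_ofSetoid_iff_rel, Setoid.comm']

theorem image_parts_eq_parts_iff (π : Finpartition (Finset.univ : Finset α)) {f : α → α}
    (hf : Function.Bijective f) :
    π.parts.image (Finset.image f) = π.parts ↔
      ∀ x y, π.part (f x) = π.part (f y) ↔ π.part x = π.part y := by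
  have himage : (∀ x, (π.part x).image f = π.part (f x)) ↔
      ∀ x y, π.part (f x) = π.part (f y) ↔ π.part x = π.part y := by
    rw [forall_comm]
    refine forall_congr' fun x ↦ ?_
    rw [Finset.ext_iff, hf.surjective.forall]
    refine forall_congr' fun y ↦ ?_
    rw [hf.injective.mem_finset_image, mem_part_univ_iff, mem_part_univ_iff]
    exact iff_comm
  rw [← himage]
  constructor
  · intro h x
    have hmem : (π.part x).image f ∈ π.parts :=
      h ▸ Finset.mem_image_of_mem _ (part_mem_parts_univ π x)
    exact (π.part_eq_of_mem hmem
      (Finset.mem_image_of_mem f ((mem_part_univ_iff π).mpr rfl))).symm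
  · intro h
    apply Finset.coe_injective
    rw [Finset.coe_image, coe_parts_eq_range_part, ← Set.range_comp,
      show Finset.image f ∘ π.part = π.part ∘ f from funext h, hf.surjective.range_comp]

end FinpartitionUniv

theorem setoid_rel_congr {α : Type*} {R : Setoid α} {a b c d : α} (hab : R a b) (hcd : R c d) :
    R a c ↔ R b d :=
  ⟨fun hac ↦ R.trans' (R.trans' (R.symm' hab) hac) hcd,
    fun hbd ↦ R.trans' (R.trans' hab hbd) (R.symm' hcd)⟩

/-- An equivalence relation on `ℤ` that descends to `ℤ/nℤ` and has no crossing there: four points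
in cyclic order are encoded as `a < b < c < d < a + n`. -/
structure IsCyclicNoncrossing (n : ℤ) (R : Setoid ℤ) : Prop where
  rel_add (x : ℤ) : R x (x + n)
  noncrossing ⦃a b c d : ℤ⦄ :
    a < b → b < c → c < d → d < a + n → R a c → R b d → R a b

namespace IsCyclicNoncrossing

variable {n : ℤ} {R : Setoid ℤ}

-- Moving the window by one replaces `s` by `s + n`, which only rotates the roles of `a, b, c, d`.
theorem of_window (hadd : ∀ x, R x (x + n)) (s : ℤ)
    (hnc : ∀ ⦃a b c d⦄, s ≤ a → a < b → b < c → c < d → d < s + n → R a c → R b d → R a b) :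
    IsCyclicNoncrossing n R := by
  refine ⟨hadd, fun a b c d ↦ ?_⟩
  suffices hwindow : ∀ w : ℤ, ∀ ⦃a b c d⦄, w ≤ a → a < b → b < c → c < d → d < w + n →
      R a c → R b d → R a b from fun hab hbc hcd hd ↦ hwindow a le_rfl hab hbc hcd hd
  intro w
  induction w using Int.inductionOn' (b := s) with
  | zero => exact hnc
  | succ w _ ih =>
    intro a b c d ha hab hbc hcd hd hac hbd
    obtain hd | rfl : d < w + n ∨ d = w + n := by omega
    · exact ih (by omega) hab hbc hcd hd hac hbd
    · have hwb := R.trans' (hadd w) (R.symm' hbd)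
      exact R.trans' (R.symm' (ih le_rfl (by omega) hab hbc (by omega) hwb hac)) hwb
  | pred w _ ih =>
    intro a b c d ha hab hbc hcd hd hac hbd
    obtain ha | rfl : w ≤ a ∨ a = w - 1 := by omega
    · exact ih ha hab hbc hcd (by omega) hac hbd
    · have hca := R.trans' (R.symm' hac) (hadd (w - 1))
      exact R.trans' hac (R.symm' (ih (by omega) hbc hcd (by omega) (by omega) hbd hca))

theorem self_mem_translations (hR : IsCyclicNoncrossing n R) : n ∈ translations R := fun x y ↦
  (setoid_rel_congr (hR.rel_add x) (hR.rel_add y)).symm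

end IsCyclicNoncrossing

theorem rel_add_mul_of_mem_translations {R : Setoid ℤ} {t x : ℤ} (ht : t ∈ translations R)
    (hx : R x (x + t)) (j : ℤ) : R x (x + j * t) := by
  have hstep (i : ℤ) : R (x + i * t) (x + (i + 1) * t) := by
    have := ((translations R).zsmul_mem ht i x (x + t)).mpr hx
    rwa [smul_eq_mul, show x + t + i * t = x + (i + 1) * t by ring] at this
  induction j using Int.induction_on with
  | zero => simp
  | succ i ih => exact R.trans' ih (hstep i)
  | pred i ih => exact R.trans' ih (R.symm' (by simpa using hstep (-i - 1)))

theorem IsCyclicNoncrossing.rel_of_modEq {n x y : ℤ} {R : Setoid ℤ}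
    (hR : IsCyclicNoncrossing n R) (hxy : x ≡ y [ZMOD n]) : R x y := by
  obtain ⟨j, hj⟩ := hxy.dvd
  have := rel_add_mul_of_mem_translations hR.self_mem_translations (hR.rel_add x) j
  rwa [show x + j * n = y by linarith] at this

theorem IsCyclicNoncrossing.rel_emod_iff {n x y : ℤ} {R : Setoid ℤ}
    (hR : IsCyclicNoncrossing n R) : R (x % n) (y % n) ↔ R x y :=
  setoid_rel_congr (hR.rel_of_modEq (Int.mod_modEq x n)) (hR.rel_of_modEq (Int.mod_modEq y n))

section Lift

variable {n : ℕ} [NeZero n]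

/-- The relation on `ℤ` whose classes are the preimages of the blocks of `π` under
`x ↦ x + c mod n`. The offset `c` moves the fixed point of a reflection. -/
def liftToInt (c : ℤ) (π : Finpartition (Finset.univ : Finset (ZMod n))) : Setoid ℤ :=
  Setoid.ker fun x : ℤ ↦ π.part ((x + c : ℤ) : ZMod n)

variable {c : ℤ}

theorem liftToInt_iff {π : Finpartition (Finset.univ : Finset (ZMod n))} {x y : ℤ} :
    liftToInt c π x y ↔ π.part ((x + c : ℤ) : ZMod n) = π.part ((y + c : ℤ) : ZMod n) := Iff.rfl

theorem liftToInt_sub_iff {π : Finpartition (Finset.univ : Finset (ZMod n))} {x y : ZMod n} :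
    liftToInt c π (x.val - c) (y.val - c) ↔ π.part x = π.part y := by
  simp only [liftToInt_iff, sub_add_cancel, Int.cast_natCast, ZMod.natCast_zmod_val]

theorem isNoncrossing_iff_liftToInt (c : ℤ) (π : Finpartition (Finset.univ : Finset (ZMod n))) :
    IsNoncrossing π ↔ IsCyclicNoncrossing n (liftToInt c π) := by
  constructor
  · intro hπ
    refine .of_window (fun x ↦ ?_) (-c) fun a b c' d ha hab hbc hcd hd hac hbd ↦ ?_
    · rw [liftToInt_iff, add_right_comm, Int.cast_add (x + c), Int.cast_natCast,
        ZMod.natCast_self, add_zero]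
    · have hval {x : ℤ} (hx : -c ≤ x) (hx' : x < -c + n) :
          (((x + c : ℤ) : ZMod n).val : ℤ) = x + c := by
        rw [ZMod.val_intCast, Int.emod_eq_of_lt (by omega) (by omega)]
      have ha' := hval ha (by omega)
      have hb' := hval (x := b) (by omega) (by omega)
      have hc' := hval (x := c') (by omega) (by omega)
      have hd' := hval (x := d) (by omega) (by omega)
      by_contra hne
      exact hπ ⟨_, _, _, _, _, _, part_mem_parts_univ π _, part_mem_parts_univ π _, hne,
        (mem_part_univ_iff π).mpr rfl, (mem_part_univ_iff π).mpr hac.symm,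
        (mem_part_univ_iff π).mpr rfl, (mem_part_univ_iff π).mpr hbd.symm,
        by omega, by omega, by omega⟩
  · rintro hR ⟨a, b, c', d, B₁, B₂, hB₁, hB₂, hne, ha, hc, hb, hd, hab, hbc, hcd⟩
    have hdn := ZMod.val_lt d
    rw [← π.part_eq_of_mem hB₁ ha, ← π.part_eq_of_mem hB₂ hb] at hne
    refine hne (liftToInt_sub_iff.mp (hR.noncrossing (c := c'.val - c) (d := d.val - c)
      (by omega) (by omega) (by omega) (by omega) ?_ ?_))
    · rw [liftToInt_sub_iff, π.part_eq_of_mem hB₁ ha, π.part_eq_of_mem hB₁ hc]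
    · rw [liftToInt_sub_iff, π.part_eq_of_mem hB₂ hb, π.part_eq_of_mem hB₂ hd]

theorem liftToInt_injective (c : ℤ) :
    Function.Injective (liftToInt (n := n) c) := fun π π' heq ↦
  ker_part_injective <| by
    ext x y
    rw [Setoid.ker_def, Setoid.ker_def, ← liftToInt_sub_iff (c := c), heq, liftToInt_sub_iff]

theorem IsCyclicNoncrossing.exists_liftToInt_eq {R : Setoid ℤ} (hR : IsCyclicNoncrossing n R)
    (c : ℤ) : ∃ π : Finpartition (Finset.univ : Finset (ZMod n)), liftToInt c π = R := by
  obtain ⟨π, hπ⟩ := exists_ker_part_eq (R.comap fun x : ZMod n ↦ (x.val : ℤ) - c)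
  refine ⟨π, ?_⟩
  have hval (x : ℤ) : R (((x + c : ℤ) : ZMod n).val - c) x := hR.rel_of_modEq <| by
    rw [ZMod.val_intCast]
    simpa using (Int.mod_modEq (x + c) n).sub_right c
  ext x y
  rw [liftToInt_iff, ← Setoid.ker_def, hπ, Setoid.comap_rel]
  exact setoid_rel_congr (hval x) (hval y)

theorem image_parts_eq_parts_iff_liftToInt {π : Finpartition (Finset.univ : Finset (ZMod n))}
    {f : ZMod n → ZMod n} (hf : Function.Bijective f) {g : ℤ → ℤ}
    (hfg : ∀ x : ℤ, ((g x + c : ℤ) : ZMod n) = f ((x + c : ℤ) : ZMod n)) :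
    π.parts.image (Finset.image f) = π.parts ↔
      ∀ x y, liftToInt c π (g x) (g y) ↔ liftToInt c π x y := by
  have hsurj : Function.Surjective fun x : ℤ ↦ ((x + c : ℤ) : ZMod n) :=
    ZMod.intCast_surjective.comp (add_right_surjective c)
  simp only [image_parts_eq_parts_iff π hf, liftToInt_iff, hfg, hsurj.forall]

theorem card_isNoncrossing_eq_card_isCyclicNoncrossing {f : ZMod n → ZMod n}
    (hf : Function.Bijective f) {g : ℤ → ℤ} (c : ℤ)
    (hfg : ∀ x : ℤ, ((g x + c : ℤ) : ZMod n) = f ((x + c : ℤ) : ZMod n)) :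
    Nat.card {π : Finpartition (Finset.univ : Finset (ZMod n)) //
        IsNoncrossing π ∧ π.parts.image (Finset.image f) = π.parts} =
      Nat.card {R // IsCyclicNoncrossing n R ∧ ∀ x y, R (g x) (g y) ↔ R x y} := by
  simp only [isNoncrossing_iff_liftToInt c, image_parts_eq_parts_iff_liftToInt hf hfg]
  refine Nat.card_congr (Equiv.ofBijective (fun π ↦ ⟨liftToInt c π.1, π.2⟩)
    ⟨fun π π' heq ↦ ?_, fun ⟨R, hR⟩ ↦ ?_⟩)
  · exact Subtype.ext (liftToInt_injective c (congrArg Subtype.val heq))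
  · obtain ⟨π, rfl⟩ := hR.1.exists_liftToInt_eq c
    exact ⟨⟨π, hR⟩, rfl⟩

end Lift

/-! ### Cutting the circle at `0` -/

/-- The cyclic relation `R` cut open at `0`: `x` and `y` remain related only within the same
window `[q * n, (q + 1) * n)`. -/
def cut (n : ℤ) (R : Setoid ℤ) : Setoid ℤ :=
  Setoid.ker (fun x : ℤ ↦ x / n) ⊓ R

section Cut

variable {n : ℤ} {R T : Setoid ℤ} {x y : ℤ}

theorem cut_iff : cut n R x y ↔ x / n = y / n ∧ R x y := Iff.rfl

theorem IsCyclicNoncrossing.isPeriodicNoncrossing_cut (hR : IsCyclicNoncrossing n R)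
    (hn : 0 < n) : IsPeriodicNoncrossing n (cut n R) where
  pos := hn
  noncrossing a b c d hab hbc hcd hac hbd := by
    rw [cut_iff] at hac hbd ⊢
    have := Int.ediv_le_ediv hn hab.le
    have := Int.ediv_le_ediv hn hbc.le
    have hda : d / n = a / n := by omega
    have hd := Int.lt_mul_ediv_self_add (x := d) hn
    rw [hda] at hd
    have := Int.mul_ediv_self_le (x := a) hn.ne'
    exact ⟨by omega, hR.noncrossing hab hbc hcd (by omega) hac.2 hbd.2⟩
  mem_translations x y := by
    rw [cut_iff, cut_iff, Int.add_ediv_of_dvd_right dvd_rfl, Int.add_ediv_of_dvd_right dvd_rfl,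
      add_left_inj, hR.self_mem_translations]

theorem not_cut_of_neg_of_nonneg (hn : 0 < n) (hx : x < 0) (hy : 0 ≤ y) : ¬ cut n R x y := by
  intro hxy
  have := Int.ediv_neg_of_neg_of_pos hx hn
  have := Int.ediv_nonneg hy hn.le
  have := (cut_iff.mp hxy).1
  omega

theorem IsPeriodicNoncrossing.isCyclicNoncrossing_comap_emod (hT : IsPeriodicNoncrossing n T) :
    IsCyclicNoncrossing n (T.comap (· % n)) := by
  refine .of_window (fun x ↦ ?_) 0 fun a b c d ha hab hbc hcd hd hac hbd ↦ ?_
  · rw [Setoid.comap_rel, Int.add_emod_right]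
  · rw [Setoid.comap_rel] at hac hbd ⊢
    rw [Int.emod_eq_of_lt (a := a) (by omega) (by omega)] at *
    rw [Int.emod_eq_of_lt (a := b) (by omega) (by omega)] at *
    rw [Int.emod_eq_of_lt (a := c) (by omega) (by omega)] at *
    rw [Int.emod_eq_of_lt (a := d) (by omega) (by omega)] at *
    exact hT.noncrossing hab hbc hcd hac hbd

theorem ediv_eq_ediv_of_rel (hT : IsPeriodicNoncrossing n T)
    (hsep : ∀ x y, x < 0 → 0 ≤ y → ¬ T x y) (hxy : T x y) : x / n = y / n := by
  have hle ⦃x y : ℤ⦄ (hxy : T x y) : y / n ≤ x / n := by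
    by_contra! hlt
    have htrans := (translations T).zsmul_mem hT.mem_translations (-(y / n)) x y
    refine hsep _ _ ?_ ?_ (htrans.mpr hxy)
    · have hx := Int.lt_mul_ediv_self_add (x := x) hT.pos
      have := mul_le_mul_of_nonneg_left (Int.add_one_le_of_lt hlt) hT.pos.le
      rw [smul_eq_mul]
      linarith
    · have := Int.mul_ediv_self_le (x := y) hT.pos.ne'
      rw [smul_eq_mul]
      linarith
  exact le_antisymm (hle (T.symm' hxy)) (hle hxy)

theorem cut_comap_emod_eq (hT : IsPeriodicNoncrossing n T)
    (hsep : ∀ x y, x < 0 → 0 ≤ y → ¬ T x y) : cut n (T.comap (· % n)) = T := by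
  ext x y
  rw [cut_iff, Setoid.comap_rel]
  suffices hmod : x / n = y / n → (T (x % n) (y % n) ↔ T x y) from
    ⟨fun h ↦ (hmod h.1).mp h.2, fun h ↦
      have hdiv := ediv_eq_ediv_of_rel hT hsep h
      ⟨hdiv, (hmod hdiv).mpr h⟩⟩
  intro hdiv
  have htrans := (translations T).zsmul_mem hT.mem_translations (y / n) (x % n) (y % n)
  rw [smul_eq_mul, mul_comm, Int.emod_add_mul_ediv, ← hdiv, Int.emod_add_mul_ediv] at htrans
  exact htrans.symm

theorem emod_ediv_self_eq_zero (hn : 0 < n) (x : ℤ) : x % n / n = 0 :=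
  Int.ediv_eq_zero_of_lt (Int.emod_nonneg x hn.ne') (Int.emod_lt_of_pos x hn)

theorem IsCyclicNoncrossing.comap_emod_cut_eq (hR : IsCyclicNoncrossing n R) (hn : 0 < n) :
    (cut n R).comap (· % n) = R := by
  ext x y
  rw [Setoid.comap_rel, cut_iff, emod_ediv_self_eq_zero hn, emod_ediv_self_eq_zero hn,
    hR.rel_emod_iff, and_iff_right rfl]

theorem IsCyclicNoncrossing.forall_cut_iff (hR : IsCyclicNoncrossing n R) (hn : 0 < n)
    {g : ℤ → ℤ} (hdiv : ∀ x y, g x / n = g y / n ↔ x / n = y / n)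
    (hmod : ∀ x y, x ≡ y [ZMOD n] → g x ≡ g y [ZMOD n]) :
    (∀ x y, cut n R (g x) (g y) ↔ cut n R x y) ↔ ∀ x y, R (g x) (g y) ↔ R x y := by
  simp only [cut_iff, hdiv, and_congr_right_iff]
  refine ⟨fun H x y ↦ ?_, fun H x y _ ↦ H x y⟩
  have hrep (z : ℤ) : R (g (z % n)) (g z) := hR.rel_of_modEq (hmod _ _ (Int.mod_modEq z n))
  rw [← setoid_rel_congr (hrep x) (hrep y), H, hR.rel_emod_iff]
  rw [emod_ediv_self_eq_zero hn, emod_ediv_self_eq_zero hn]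

theorem card_isCyclicNoncrossing_eq_card_isPeriodicNoncrossing (hn : 0 < n) {g : ℤ → ℤ}
    (hdiv : ∀ x y, g x / n = g y / n ↔ x / n = y / n)
    (hmod : ∀ x y, x ≡ y [ZMOD n] → g x ≡ g y [ZMOD n]) :
    Nat.card {R // IsCyclicNoncrossing n R ∧ ∀ x y, R (g x) (g y) ↔ R x y} =
      Nat.card {T // IsPeriodicNoncrossing n T ∧ (∀ x y, x < 0 → 0 ≤ y → ¬ T x y) ∧
        ∀ x y, T (g x) (g y) ↔ T x y} :=
  Nat.card_congr {
    toFun := fun R ↦ ⟨cut n R.1, R.2.1.isPeriodicNoncrossing_cut hn,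
      fun _ _ ↦ not_cut_of_neg_of_nonneg hn, (R.2.1.forall_cut_iff hn hdiv hmod).mpr R.2.2⟩
    invFun := fun T ↦
      have hR := T.2.1.isCyclicNoncrossing_comap_emod
      ⟨T.1.comap (· % n), hR, (hR.forall_cut_iff hn hdiv hmod).mp
        (by rw [cut_comap_emod_eq T.2.1 T.2.2.1]; exact T.2.2.2)⟩
    left_inv := fun R ↦ Subtype.ext (R.2.1.comap_emod_cut_eq hn)
    right_inv := fun T ↦ Subtype.ext (cut_comap_emod_eq T.2.1 T.2.2.1) }

end Cut

/-! ### Unwinding rotation-invariant relations -/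

/-- A point is central for a `k`-translation-invariant relation if the translation by `k` fixes
its class. -/
def IsCentral (k : ℤ) (R : Setoid ℤ) (x : ℤ) : Prop := R x (x + k)

/-- A cyclic noncrossing relation invariant under the rotation by `k`, where the circle winds
at least twice around its quotient `ℤ/kℤ`. -/
structure IsWound (k n : ℤ) (R : Setoid ℤ) : Prop extends IsCyclicNoncrossing n R where
  pos : 0 < k
  two_mul_le : 2 * k ≤ n
  mem_translations : k ∈ translations R

theorem IsCentral.of_rel {k x y : ℤ} {R : Setoid ℤ} (hk : k ∈ translations R)
    (hx : IsCentral k R x) (hxy : R x y) : IsCentral k R y :=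
  (setoid_rel_congr hxy ((hk x y).mpr hxy)).mp hx

namespace IsWound

variable {k n x y z : ℤ} {R : Setoid ℤ}

-- The class of `x` meets its translate by `k` in a crossing unless the two coincide.
theorem isCentral_of_add_le (hR : IsWound k n R) (hxy : R x y) (hxz : R x z) (hz : x + k ≤ z)
    (hzy : z < y + k) (hy : y + k ≤ x + n) : IsCentral k R x := by
  rcases hz.eq_or_lt with rfl | hz
  · exact hxz
  rcases hy.eq_or_lt with hy | hy
  · have hcentral : IsCentral k R y := by
      rw [IsCentral, hy]
      exact R.trans' (R.symm' hxy) (hR.rel_add x)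
    exact hcentral.of_rel hR.mem_translations (R.symm' hxy)
  · have := hR.pos
    exact hR.noncrossing (by omega) hz hzy hy hxz ((hR.mem_translations x y).mpr hxy)

theorem abs_sub_lt_or_isCentral (hR : IsWound k n R) (hxy : R x y) (hyz : R y z)
    (hxy' : |x - y| < k) (hyz' : |y - z| < k) : |x - z| < k ∨ IsCentral k R x := by
  have h2k := hR.two_mul_le
  have hxz := R.trans' hxy hyz
  rw [abs_sub_lt_iff] at hxy' hyz' ⊢
  rcases le_or_gt (x + k) z with hz | hz
  · exact .inr (hR.isCentral_of_add_le hxy hxz hz (by omega) (by omega))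
  rcases le_or_gt (z + k) x with hx | hx
  · have hz := hR.isCentral_of_add_le (R.symm' hyz) (R.symm' hxz) hx (by omega) (by omega)
    exact .inr (hz.of_rel hR.mem_translations (R.symm' hxz))
  · exact .inl (by omega)

theorem rel_of_isCentral (hR : IsWound k n R) (hx : IsCentral k R x) (hy : IsCentral k R y) :
    R x y := by
  have hpos := hR.pos
  have h2k := hR.two_mul_le
  have hnonneg := Int.emod_nonneg (y - x) hpos.ne'
  have hlt := Int.emod_lt_of_pos (y - x) hpos
  obtain ⟨z, hz⟩ : ∃ z, z = x + (y - x) % k := ⟨_, rfl⟩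
  have hyz : R y z := by
    have := rel_add_mul_of_mem_translations hR.mem_translations hy (-((y - x) / k))
    rwa [show y + -((y - x) / k) * k = z by
      linarith [Int.emod_add_mul_ediv (y - x) k]] at this
  refine R.trans' ?_ (R.symm' hyz)
  rcases (show x ≤ z by omega).eq_or_lt with hxz | hxz
  · rw [← hxz]
  · exact hR.noncrossing hxz (by omega) (by omega) (by omega) hx
      (hy.of_rel hR.mem_translations hyz)

end IsWound

/-- The unwound relation: nearby points stay related, distant ones only within the central
class. -/
def unwind {k n : ℤ} {R : Setoid ℤ} (hR : IsWound k n R) : Setoid ℤ where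
  r x y := R x y ∧ (|x - y| < k ∨ IsCentral k R x)
  iseqv :=
    { refl := fun x ↦ ⟨R.refl' x, .inl (by simpa using hR.pos)⟩
      symm := fun {x y} ⟨hxy, h⟩ ↦ ⟨R.symm' hxy, h.imp (abs_sub_comm x y ▸ ·)
        (·.of_rel hR.mem_translations hxy)⟩
      trans := fun {x y z} ⟨hxy, h⟩ ⟨hyz, h'⟩ ↦ ⟨R.trans' hxy hyz, h.elim
        (fun hnear ↦ h'.elim (hR.abs_sub_lt_or_isCentral hxy hyz hnear)
          fun hy ↦ .inr (hy.of_rel hR.mem_translations (R.symm' hxy)))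
        .inr⟩ }

section Unwind

variable {k n x y : ℤ} {R : Setoid ℤ}

theorem unwind_iff {hR : IsWound k n R} :
    unwind hR x y ↔ R x y ∧ (|x - y| < k ∨ IsCentral k R x) := Iff.rfl

theorem isNoncrossingOnLine_unwind (hR : IsWound k n R) : IsNoncrossingOnLine (unwind hR) := by
  intro a b c d hab hbc hcd ⟨hac, hac'⟩ ⟨hbd, hbd'⟩
  have h2k := hR.two_mul_le
  have hpos := hR.pos
  rw [abs_sub_lt_iff] at hac' hbd'
  suffices h : R a b by
    refine ⟨h, hac'.imp_left fun h ↦ ?_⟩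
    rw [abs_sub_lt_iff]
    omega
  by_cases ha : IsCentral k R a <;> by_cases hb : IsCentral k R b
  · exact hR.rel_of_isCentral ha hb
  · have hbd' := hbd'.resolve_right hb
    have hac'' : R a (c - k) := by
      have := rel_add_mul_of_mem_translations hR.mem_translations
        (ha.of_rel hR.mem_translations hac) (-1)
      rw [neg_one_mul] at this
      exact R.trans' hac this
    have hcb := hR.noncrossing (a := c - k) (by omega) hbc hcd (by omega)
      (R.trans' (R.symm' hac'') hac) hbd
    exact R.trans' hac'' hcb
  · have hac' := hac'.resolve_right ha
    exact hR.noncrossing hab hbc (by omega) (by omega) hac hb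
  · have hac' := hac'.resolve_right ha
    have hbd' := hbd'.resolve_right hb
    exact hR.noncrossing hab hbc hcd (by omega) hac hbd

theorem isPeriodicNoncrossing_unwind (hR : IsWound k n R) :
    IsPeriodicNoncrossing k (unwind hR) where
  pos := hR.pos
  noncrossing := isNoncrossingOnLine_unwind hR
  mem_translations x y := by
    rw [unwind_iff, unwind_iff, IsCentral, IsCentral, add_sub_add_right_eq_sub,
      hR.mem_translations, hR.mem_translations]

end Unwind

namespace IsPeriodicNoncrossing

variable {k n x y : ℤ} {T : Setoid ℤ}

theorem isCentral_of_add_le (hT : IsPeriodicNoncrossing k T) (hxy : T x y) (hy : x + k ≤ y) :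
    IsCentral k T x := by
  have hpos := hT.pos
  rcases hy.eq_or_lt with rfl | hy
  · exact hxy
  · exact hT.noncrossing (by omega) hy (by omega) hxy ((hT.mem_translations x y).mpr hxy)

theorem abs_sub_lt_or_isCentral (hT : IsPeriodicNoncrossing k T) (hxy : T x y) :
    |x - y| < k ∨ IsCentral k T x := by
  rw [abs_sub_lt_iff]
  rcases le_or_gt (x + k) y with hy | hy
  · exact .inr (hT.isCentral_of_add_le hxy hy)
  rcases le_or_gt (y + k) x with hx | hx
  · exact .inr ((hT.isCentral_of_add_le (T.symm' hxy) hx).of_rel hT.mem_translations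
      (T.symm' hxy))
  · exact .inl (by omega)

theorem mem_translations_of_dvd (hT : IsPeriodicNoncrossing k T) (hkn : k ∣ n) :
    n ∈ translations T := by
  obtain ⟨d, rfl⟩ := hkn
  rw [mul_comm]
  exact (translations T).zsmul_mem hT.mem_translations d

theorem rel_of_isCentral_of_rel_add_mul (hT : IsPeriodicNoncrossing k T) (hkn : k ∣ n)
    (hx : IsCentral k T x) {j : ℤ} (hxy : T x (y + j * n)) : T x y := by
  have htrans := (translations T).zsmul_mem (hT.mem_translations_of_dvd hkn) j x y
  obtain ⟨d, rfl⟩ := hkn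
  rw [smul_eq_mul] at htrans
  refine htrans.mp (T.trans' (T.symm' ?_) hxy)
  rw [show j * (k * d) = j * d * k by ring]
  exact rel_add_mul_of_mem_translations hT.mem_translations hx (j * d)

end IsPeriodicNoncrossing

/-- The relation induced modulo `n` by an `n`-translation-invariant relation. -/
def wind {n : ℤ} {T : Setoid ℤ} (hn : n ∈ translations T) : Setoid ℤ where
  r x y := ∃ j : ℤ, T x (y + j * n)
  iseqv :=
    { refl := fun x ↦ ⟨0, by simp⟩
      symm := fun {x y} ⟨j, hj⟩ ↦ ⟨-j, by
        have := ((translations T).zsmul_mem hn (-j) _ _).mpr (T.symm' hj)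
        simpa using this⟩
      trans := fun {x y z} ⟨i, hi⟩ ⟨j, hj⟩ ↦ ⟨j + i, by
        have := ((translations T).zsmul_mem hn i _ _).mpr hj
        rw [add_mul, ← add_assoc]
        exact T.trans' hi this⟩ }

section Wind

variable {k n x y : ℤ} {T : Setoid ℤ}

theorem wind_of_rel (hn : n ∈ translations T) (hxy : T x y) : wind hn x y :=
  ⟨0, by simpa using hxy⟩

theorem wind_of_rel_sub (hn : n ∈ translations T) (hxy : T x (y - n)) : wind hn x y :=
  ⟨-1, by simpa [sub_eq_add_neg] using hxy⟩

theorem rel_or_rel_sub_of_wind (hT : IsPeriodicNoncrossing k T) (hkn : k ∣ n) (h2k : 2 * k ≤ n)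
    {hn : n ∈ translations T} (hxy : x < y) (hyx : y < x + n) (h : wind hn x y) :
    T x y ∨ T x (y - n) := by
  obtain ⟨j, hj⟩ := h
  rcases hT.abs_sub_lt_or_isCentral hj with hnear | hx
  · rw [abs_sub_lt_iff] at hnear
    have : -2 < j := by nlinarith
    have : j < 1 := by nlinarith
    obtain rfl | rfl : j = 0 ∨ j = -1 := by omega
    · exact .inl (by simpa using hj)
    · exact .inr (by simpa [sub_eq_add_neg] using hj)
  · exact .inl (hT.rel_of_isCentral_of_rel_add_mul hkn hx hj)

theorem isCyclicNoncrossing_wind (hT : IsPeriodicNoncrossing k T) (hkn : k ∣ n)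
    (h2k : 2 * k ≤ n) (hn : n ∈ translations T) : IsCyclicNoncrossing n (wind hn) where
  rel_add x := ⟨-1, by simp⟩
  noncrossing a b c d hab hbc hcd hd hac hbd := by
    have hsub {x y : ℤ} : T (x - n) (y - n) ↔ T x y := (translations T).neg_mem hn x y
    rcases rel_or_rel_sub_of_wind hT hkn h2k (by omega) (by omega) hac with hac | hac <;>
      rcases rel_or_rel_sub_of_wind hT hkn h2k (by omega) (by omega) hbd with hbd | hbd
    · exact wind_of_rel hn (hT.noncrossing hab hbc hcd hac hbd)
    · have hda := hT.noncrossing (show d - n < a by omega) hab hbc (T.symm' hbd) hac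
      exact wind_of_rel hn (T.symm' (T.trans' hbd hda))
    · have hbc' := hT.noncrossing (show b - n < c - n by omega) (by omega)
        (show d - n < a by omega) (hsub.mpr hbd) (T.symm' hac)
      exact wind_of_rel_sub hn (T.trans' hac (T.symm' hbc'))
    · have hcd' := hT.noncrossing (show c - n < d - n by omega) (by omega) hab
        (T.symm' hac) (T.symm' hbd)
      exact wind_of_rel hn (T.trans' hac (T.trans' hcd' (T.symm' hbd)))

theorem isWound_wind (hT : IsPeriodicNoncrossing k T) (hkn : k ∣ n) (h2k : 2 * k ≤ n)
    (hn : n ∈ translations T) : IsWound k n (wind hn) where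
  toIsCyclicNoncrossing := isCyclicNoncrossing_wind hT hkn h2k hn
  pos := hT.pos
  two_mul_le := h2k
  mem_translations x y := exists_congr fun j ↦ by
    rw [add_right_comm, hT.mem_translations]

theorem isCentral_wind_iff (hT : IsPeriodicNoncrossing k T) (h2k : 2 * k ≤ n)
    (hn : n ∈ translations T) : IsCentral k (wind hn) x ↔ IsCentral k T x := by
  refine ⟨fun ⟨j, hj⟩ ↦ (hT.abs_sub_lt_or_isCentral hj).resolve_left fun hnear ↦ ?_,
    wind_of_rel hn⟩
  have hpos := hT.pos
  rw [abs_sub_lt_iff] at hnear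
  have : j < 0 := by nlinarith
  have : -1 < j := by nlinarith
  omega

theorem unwind_wind (hT : IsPeriodicNoncrossing k T) (hkn : k ∣ n) (h2k : 2 * k ≤ n)
    (hn : n ∈ translations T) : unwind (isWound_wind hT hkn h2k hn) = T := by
  ext x y
  rw [unwind_iff, isCentral_wind_iff hT h2k]
  refine ⟨fun ⟨⟨j, hj⟩, h⟩ ↦ ?_, fun h ↦ ⟨wind_of_rel hn h, hT.abs_sub_lt_or_isCentral h⟩⟩
  suffices hx : j = 0 ∨ IsCentral k T x by
    rcases hx with rfl | hx
    · simpa using hj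
    · exact hT.rel_of_isCentral_of_rel_add_mul hkn hx hj
  refine or_iff_not_imp_right.mpr fun hx ↦ ?_
  have hxy := h.resolve_right hx
  have hxyj := (hT.abs_sub_lt_or_isCentral hj).resolve_right hx
  have hpos := hT.pos
  rw [abs_sub_lt_iff] at hxy hxyj
  have : j < 1 := by nlinarith
  have : -1 < j := by nlinarith
  omega

theorem wind_unwind {R : Setoid ℤ} (hR : IsWound k n R) (hn : n ∈ translations (unwind hR)) :
    wind hn = R := by
  have hmod (j y : ℤ) : R (y + j * n) y := hR.rel_of_modEq (by simp)
  have hpos := hR.pos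
  have h2k := hR.two_mul_le
  ext x y
  refine ⟨fun ⟨j, hj⟩ ↦ R.trans' hj.1 (hmod j y), fun hxy ↦ ?_⟩
  obtain ⟨z, hz, hxz, hzx⟩ : ∃ z, wind hn z y ∧ x ≤ z ∧ z < x + n := by
    refine ⟨x + (y - x) % n, ?_, by have := Int.emod_nonneg (y - x) (b := n); omega,
      by have := Int.emod_lt_of_pos (y - x) (b := n); omega⟩
    refine ⟨-((y - x) / n), ?_⟩
    rw [show y + -((y - x) / n) * n = x + (y - x) % n by
      linarith [Int.emod_add_mul_ediv (y - x) n]]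
  have hRxz : R x z := by
    obtain ⟨j, hj⟩ := hz
    exact R.trans' hxy (R.symm' (R.trans' hj.1 (hmod j y)))
  refine (wind hn).trans' ?_ hz
  rcases lt_or_ge z (x + k) with hnear | hfar
  · exact wind_of_rel hn ⟨hRxz, .inl (abs_sub_lt_iff.mpr (by omega))⟩
  rcases le_or_gt (z + k) (x + n) with hfar' | hnear
  · exact wind_of_rel hn
      ⟨hRxz, .inr (hR.isCentral_of_add_le hRxz hRxz hfar (by omega) hfar')⟩
  · refine wind_of_rel_sub hn ⟨R.trans' hRxz ?_, .inl (abs_sub_lt_iff.mpr (by omega))⟩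
    simpa [sub_eq_add_neg] using R.symm' (hmod (-1) z)

theorem card_rotation_invariant_eq_card_isPeriodicNoncrossing (hk : 0 < k) (hkn : k ∣ n)
    (h2k : 2 * k ≤ n) :
    Nat.card {R // IsCyclicNoncrossing n R ∧ k ∈ translations R} =
      Nat.card {T // IsPeriodicNoncrossing k T} :=
  Nat.card_congr {
    toFun := fun R ↦ ⟨_, isPeriodicNoncrossing_unwind ⟨R.2.1, hk, h2k, R.2.2⟩⟩
    invFun := fun T ↦
      have hR := isWound_wind T.2 hkn h2k (T.2.mem_translations_of_dvd hkn)
      ⟨_, hR.toIsCyclicNoncrossing, hR.mem_translations⟩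
    left_inv := fun R ↦
      have hR : IsWound k n R.1 := ⟨R.2.1, hk, h2k, R.2.2⟩
      Subtype.ext (wind_unwind hR
        ((isPeriodicNoncrossing_unwind hR).mem_translations_of_dvd hkn))
    right_inv := fun T ↦
      Subtype.ext (unwind_wind T.2 hkn h2k (T.2.mem_translations_of_dvd hkn)) }

end Wind

/-! ### Fixed points of rotations and reflections -/

theorem IsCyclicNoncrossing.mem_translations_iff_gcd {n : ℤ} {R : Setoid ℤ}
    (hR : IsCyclicNoncrossing n R) {ℓ : ℤ} :
    ℓ ∈ translations R ↔ (ℓ.gcd n : ℤ) ∈ translations R := by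
  have hmul {t : ℤ} (ht : t ∈ translations R) (j : ℤ) : t * j ∈ translations R := by
    rw [mul_comm]
    exact (translations R).zsmul_mem ht j
  constructor
  · intro hℓ
    rw [Int.gcd_eq_gcd_ab]
    exact (translations R).add_mem (hmul hℓ _) (hmul hR.self_mem_translations _)
  · intro hgcd
    obtain ⟨j, hj⟩ := Int.gcd_dvd_left ℓ n
    rw [hj]
    exact hmul hgcd j

section FixedPoints

variable {n : ℕ} [NeZero n]

theorem card_isNoncrossing_rotation_eq_catalan {ℓ : ℤ} (hℓ : (n : ℤ) ∣ ℓ) :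
    Nat.card {π : Finpartition (Finset.univ : Finset (ZMod n)) // IsNoncrossing π ∧
      π.parts.image (Finset.image (fun x ↦ x + (ℓ : ZMod n))) = π.parts} = catalan n := by
  have hn : 0 < n := NeZero.pos n
  rw [card_isNoncrossing_eq_card_isCyclicNoncrossing
      (f := fun x ↦ x + (ℓ : ZMod n)) (Equiv.addRight _).bijective (g := id) 0
      (by simp [(ZMod.intCast_zmod_eq_zero_iff_dvd ℓ n).mpr hℓ]),
    card_isCyclicNoncrossing_eq_card_isPeriodicNoncrossing (g := id) (by exact_mod_cast hn)
      (fun _ _ ↦ Iff.rfl) (fun _ _ ↦ id)]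
  simp only [id, implies_true, and_true]
  rw [card_isPeriodicNoncrossing_eq fun h hh ↦ levelSetoid.forall_not_iff_nonneg hh,
    card_isBridge_nonneg hn]

theorem card_isNoncrossing_rotation_eq_choose {ℓ : ℤ} (hℓ : 2 * ℓ.gcd n ≤ n) :
    Nat.card {π : Finpartition (Finset.univ : Finset (ZMod n)) // IsNoncrossing π ∧
      π.parts.image (Finset.image (fun x ↦ x + (ℓ : ZMod n))) = π.parts} =
      (2 * ℓ.gcd n).choose (ℓ.gcd n) := by
  have hk : 0 < ℓ.gcd n := Int.gcd_pos_of_ne_zero_right _ (by exact_mod_cast NeZero.ne n)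
  rw [card_isNoncrossing_eq_card_isCyclicNoncrossing
    (f := fun x ↦ x + (ℓ : ZMod n)) (Equiv.addRight _).bijective (g := (· + ℓ)) 0 (by simp)]
  simp only [← mem_translations]
  rw [Nat.card_congr (Equiv.subtypeEquivRight fun R ↦
      and_congr_right fun hR ↦ hR.mem_translations_iff_gcd),
    card_rotation_invariant_eq_card_isPeriodicNoncrossing (by exact_mod_cast hk)
      (Int.gcd_dvd_right ℓ n) (by exact_mod_cast hℓ), ← card_isBridge hk]
  simpa only [and_true] using
    card_isPeriodicNoncrossing_eq (p := fun _ ↦ True) (q := fun _ ↦ True) fun _ _ ↦ Iff.rfl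

end FixedPoints

theorem neg_one_sub_ediv {n : ℤ} (hn : 0 < n) (x : ℤ) : (-1 - x) / n = -1 - x / n := by
  have := Int.mul_ediv_self_le (x := x) hn.ne'
  have := Int.lt_mul_ediv_self_add (x := x) hn
  rw [Int.ediv_eq_iff_of_pos hn]
  constructor <;> linarith

theorem card_isNoncrossing_reflection_eq_choose (m : ℕ) :
    Nat.card {π : Finpartition (Finset.univ : Finset (ZMod (2 * m + 1))) // IsNoncrossing π ∧
      π.parts.image (Finset.image (fun x ↦ -x)) = π.parts} = (2 * m + 1).choose m := by
  have hn : (0 : ℤ) < (2 * m + 1 : ℕ) := by positivity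
  -- The fixed point `0` of the reflection is moved to the middle of the window `[0, n)`, where
  -- the reflection becomes `x ↦ -1 - x` and respects the cut.
  have hreflect (x : ℤ) :
      ((-1 - x + -m : ℤ) : ZMod (2 * m + 1)) = -((x + -m : ℤ) : ZMod (2 * m + 1)) := by
    have := ZMod.natCast_self (2 * m + 1)
    push_cast at this ⊢
    linear_combination -this
  rw [card_isNoncrossing_eq_card_isCyclicNoncrossing
      (f := fun x ↦ -x) neg_involutive.bijective _ hreflect,
    card_isCyclicNoncrossing_eq_card_isPeriodicNoncrossing hn
      (fun x y ↦ by rw [neg_one_sub_ediv hn, neg_one_sub_ediv hn, sub_right_inj])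
      (fun x y h ↦ h.sub_left _),
    card_isPeriodicNoncrossing_eq fun h hh ↦ and_congr (levelSetoid.forall_not_iff_nonneg hh)
      (levelSetoid.reflection_iff_even hh),
    card_isBridge_even_nonneg]

theorem two_mul_gcd_le_of_not_dvd {n : ℕ} (hn : 0 < n) {ℓ : ℤ} (hℓ : ¬ (n : ℤ) ∣ ℓ) :
    2 * ℓ.gcd n ≤ n := by
  obtain ⟨d, hd⟩ : ℓ.gcd n ∣ n := by exact_mod_cast Int.gcd_dvd_right ℓ n
  have hd0 : d ≠ 0 := by
    rintro rfl
    omega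
  have hd1 : d ≠ 1 := by
    rintro rfl
    rw [mul_one] at hd
    exact hℓ (hd ▸ Int.gcd_dvd_left ℓ n)
  calc 2 * ℓ.gcd n = ℓ.gcd n * 2 := mul_comm _ _
    _ ≤ ℓ.gcd n * d := Nat.mul_le_mul_left _ (by omega)
    _ = n := hd.symm

theorem isPrimitiveRoot_zpow_div_gcd {K : Type*} [Field K] {ζ : K} {n : ℕ} (hn : 0 < n)
    (hζ : IsPrimitiveRoot ζ n) (ℓ : ℤ) : IsPrimitiveRoot (ζ ^ ℓ) (n / ℓ.gcd n) := by
  have hk : 0 < ℓ.gcd n := Int.gcd_pos_of_ne_zero_right _ (by exact_mod_cast hn.ne')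
  have hkn : ℓ.gcd n ∣ n := by exact_mod_cast Int.gcd_dvd_right ℓ n
  have hpow := hζ.pow hn (Nat.mul_div_cancel' hkn).symm
  have hcoprime : (ℓ / ℓ.gcd n).gcd (n / ℓ.gcd n : ℕ) = 1 := by
    rw [Int.natCast_div]
    exact Int.gcd_ediv_gcd_ediv_gcd hk
  have := hpow.zpow_of_gcd_eq_one _ hcoprime
  rwa [← zpow_natCast, ← zpow_mul, Int.mul_ediv_cancel' (Int.gcd_dvd_left ℓ n)] at this

theorem aeval_primitiveRoot_add_inv_eq_choose {K : Type*} [Field K] [CharZero K] {ζ : K}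
    {n d k : ℕ} (hζ : IsPrimitiveRoot ζ d) (hodd : Odd d) (hd : 2 ≤ d) (hdk : d * k = n)
    {P : MvPolynomial (Fin 2) ℤ}
    (hP : P * (gfib (n + 1) * gfibFact n * gfibFact n) = gfibFact (2 * n)) :
    aeval ![ζ + ζ⁻¹, -1] P = ((2 * k).choose k : K) := by
  subst hdk
  have hζ0 : ζ ≠ 0 := hζ.ne_zero (by omega)
  rw [← mul_inv_cancel₀ hζ0]
  refine aeval_add_neg_mul_eq_choose hd hζ.pow_eq_one hζ.inv.pow_eq_one ?_ hP
  intro r hr hrd hpow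
  have hsq : ζ ^ (2 * r) = 1 := by
    rw [two_mul, pow_add]
    nth_rw 2 [hpow]
    rw [← mul_pow, mul_inv_cancel₀ hζ0, one_pow]
  have hdvd := (Nat.coprime_two_right.mpr hodd).dvd_of_dvd_mul_left (hζ.dvd_of_pow_eq_one _ hsq)
  exact absurd (Nat.le_of_dvd hr hdvd) (by omega)

/-- Dihedral sieving for noncrossing partitions of `ℤ/nℤ`, `n` odd: the `(s,t)`-Catalan
polynomial `P` evaluated at `(ζ^ℓ + ζ^{-ℓ}, -1)` counts the noncrossing partitions fixed
by the rotation `x ↦ x + ℓ`, and `P(0,1)` counts those fixed by the reflection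
`x ↦ -x`. -/
theorem dihedral_sieving_noncrossing_partitions (n : ℕ) [NeZero n] (hn : Odd n)
    (P : MvPolynomial (Fin 2) ℤ)
    (hP : P * (gfib (n + 1) * gfibFact n * gfibFact n) = gfibFact (2 * n)) :
    (∀ ℓ : ℤ,
      aeval ![primRoot n ^ ℓ + primRoot n ^ (-ℓ), (-1 : ℂ)] P
        = (Nat.card {π : Finpartition (Finset.univ : Finset (ZMod n)) //
            IsNoncrossing π ∧
              π.parts.image (Finset.image (fun x => x + (ℓ : ZMod n))) = π.parts} : ℂ)) ∧
    aeval ![(0 : ℂ), 1] P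
      = (Nat.card {π : Finpartition (Finset.univ : Finset (ZMod n)) //
          IsNoncrossing π ∧
            π.parts.image (Finset.image (fun x => -x)) = π.parts} : ℂ) := by
  have hpos : 0 < n := NeZero.pos n
  have hζ : IsPrimitiveRoot (primRoot n) n := Complex.isPrimitiveRoot_exp n hpos.ne'
  refine ⟨fun ℓ ↦ ?_, ?_⟩
  · rw [zpow_neg]
    by_cases hℓ : (n : ℤ) ∣ ℓ
    · rw [(hζ.zpow_eq_one_iff_dvd ℓ).mpr hℓ, inv_one, one_add_one_eq_two,
        card_isNoncrossing_rotation_eq_catalan hℓ, aeval_two_neg_one_eq_catalan hP]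
    · have hk := two_mul_gcd_le_of_not_dvd hpos hℓ
      rw [card_isNoncrossing_rotation_eq_choose hk]
      have hdvd : ℓ.gcd n ∣ n := by exact_mod_cast Int.gcd_dvd_right ℓ n
      exact aeval_primitiveRoot_add_inv_eq_choose (isPrimitiveRoot_zpow_div_gcd hpos hζ ℓ)
        (hn.of_dvd_nat (Nat.div_dvd_of_dvd hdvd))
        ((Nat.le_div_iff_mul_le (Nat.pos_of_dvd_of_pos hdvd hpos)).mpr hk)
        (Nat.div_mul_cancel hdvd) hP
  · obtain ⟨m, rfl⟩ := hn
    rw [card_isNoncrossing_reflection_eq_choose, aeval_zero_one_eq_choose hP]
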